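/- arXiv:1802.01094 — 8 statements merged into one kernel-verified Lean document; each statement's English description precedes it below -/
import Mathlib

section
/- Let n ∈ ℕ, let U ⊆ ℝⁿ be an open subset whose complement ℝⁿ \ U is nonempty, and let f be a Schwartz function on ℝⁿ with f(z) = 0 for every z ∈ ℝⁿ \ U. Then the following are equivalent: (1) for every z ∈ ℝⁿ \ U and every k ∈ ℕ the k-th iterated derivative of f at z is zero (f is flat at ℝⁿ \ U); (2) for every m ∈ ℕ one has sup_{x ∈ U} |f(x)| / dist(x, ℝⁿ \ U)^m < ∞. -/
/-!
Taylor's formula at the points of the complement `Z` of `U` bounds a flat `f` by a multiple of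
`dist(x, z) ^ m` for every `z ∈ Z`, hence by the same multiple of `dist(x, Z) ^ m`.
Conversely, if `f` is `O(|x - z| ^ m)` at `z ∈ Z` for every `m`, then so is its derivative:
a function of size `r ^ (2 * m)` with Lipschitz derivative has derivative `O(r ^ m)`, as one sees
by comparing its values at distance `r ^ m`. Iterating, all derivatives of `f` decay to infinite
order at `z`, and in particular they vanish there.
-/

open Metric Set Filter Topology Asymptotics
open scoped ContDiff NNReal

section NormedSpace

variable {E F : Type*} [NormedAddCommGroup E] [NormedSpace ℝ E]
  [NormedAddCommGroup F] [NormedSpace ℝ F] {f : E → F} {x z : E}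

theorem norm_iteratedFDeriv_le_mul_norm_sub_pow {s : Set E} {C : ℝ} {m k j : ℕ}
    (hs : Convex ℝ s) (hf : ∀ y ∈ s, ContDiffAt ℝ m f y)
    (hC : ∀ y ∈ s, ‖iteratedFDeriv ℝ m f y‖ ≤ C) (hz : z ∈ s)
    (hflat : ∀ i < m, iteratedFDeriv ℝ i f z = 0) (hkj : k + j = m) (hx : x ∈ s) :
    ‖iteratedFDeriv ℝ k f x‖ ≤ C * ‖x - z‖ ^ j := by
  induction j generalizing k x with
  | zero =>
    obtain rfl : k = m := hkj
    simpa using hC x hx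
  | succ j ih =>
    have hkm : k < m := by lia
    have hC₀ : 0 ≤ C := (norm_nonneg _).trans (hC z hz)
    have hseg : segment ℝ z x ⊆ s := hs.segment_subset hz hx
    have hdiff : ∀ y ∈ segment ℝ z x, DifferentiableAt ℝ (iteratedFDeriv ℝ k f) y := fun y hy ↦
      (hf y (hseg hy)).differentiableAt_iteratedFDeriv (mod_cast hkm)
    have hderiv : ∀ y ∈ segment ℝ z x,
        ‖fderiv ℝ (iteratedFDeriv ℝ k f) y‖ ≤ C * ‖x - z‖ ^ j := fun y hy ↦ by
      have hyx : ‖y - z‖ ≤ ‖x - z‖ := norm_sub_le_of_mem_segment hy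
      rw [norm_fderiv_iteratedFDeriv]
      exact (ih (by lia) (hseg hy)).trans (by gcongr)
    calc ‖iteratedFDeriv ℝ k f x‖ = ‖iteratedFDeriv ℝ k f x - iteratedFDeriv ℝ k f z‖ := by
          rw [hflat k hkm, sub_zero]
      _ ≤ C * ‖x - z‖ ^ j * ‖x - z‖ :=
          (convex_segment z x).norm_image_sub_le_of_norm_fderiv_le hdiff hderiv
            (left_mem_segment ℝ z x) (right_mem_segment ℝ z x)
      _ = C * ‖x - z‖ ^ (j + 1) := by ring

theorem norm_fderiv_le_of_lipschitzOnWith_closedBall {A t : ℝ} {M : ℝ≥0} (ht : 0 < t)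
    (hf : ∀ y ∈ closedBall x t, DifferentiableAt ℝ f y)
    (hA : ∀ y ∈ closedBall x t, ‖f y‖ ≤ A)
    (hM : LipschitzOnWith M (fderiv ℝ f) (closedBall x t)) :
    ‖fderiv ℝ f x‖ ≤ 2 * A / t + M * t := by
  have hx : x ∈ closedBall x t := mem_closedBall_self ht.le
  have hA₀ : 0 ≤ A := (norm_nonneg _).trans (hA x hx)
  refine ContinuousLinearMap.opNorm_le_of_unit_norm (by positivity) fun v hv ↦ ?_
  have hnorm : ‖t • v‖ = t := by rw [norm_smul, hv, Real.norm_of_nonneg ht.le, mul_one]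
  have hxv : x + t • v ∈ closedBall x t := by simp [hnorm]
  have hremainder : ‖f (x + t • v) - f x - t • fderiv ℝ f x v‖ ≤ M * t * t := by
    have hderiv : ∀ y ∈ closedBall x t, ‖fderiv ℝ f y - fderiv ℝ f x‖ ≤ M * t := fun y hy ↦
      (hM.norm_sub_le hy hx).trans (by gcongr; exact mem_closedBall_iff_norm.1 hy)
    simpa [hnorm] using
      (convex_closedBall x t).norm_image_sub_le_of_norm_fderiv_le' hf hderiv hx hxv
  have hscaled : t * ‖fderiv ℝ f x v‖ ≤ A + A + M * t * t :=
    calc t * ‖fderiv ℝ f x v‖ = ‖t • fderiv ℝ f x v‖ := by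
          rw [norm_smul, Real.norm_of_nonneg ht.le]
      _ = ‖f (x + t • v) - f x - (f (x + t • v) - f x - t • fderiv ℝ f x v)‖ := by
          rw [sub_sub_cancel]
      _ ≤ ‖f (x + t • v)‖ + ‖f x‖ + ‖f (x + t • v) - f x - t • fderiv ℝ f x v‖ :=
          (norm_sub_le _ _).trans (by gcongr; exact norm_sub_le _ _)
      _ ≤ A + A + M * t * t := by gcongr; exacts [hA _ hxv, hA _ hx]
  calc ‖fderiv ℝ f x v‖ ≤ (A + A + M * t * t) / t := by rwa [le_div_iff₀' ht]
    _ = 2 * A / t + M * t := by field_simp; ring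

theorem isBigO_fderiv_norm_sub_pow {m : ℕ} (hf : ContDiffAt ℝ 2 f z)
    (h : f =O[𝓝 z] fun y ↦ ‖y - z‖ ^ (2 * m)) :
    fderiv ℝ f =O[𝓝 z] fun y ↦ ‖y - z‖ ^ m := by
  have hfderiv : ContDiffAt ℝ 1 (fderiv ℝ f) z := hf.fderiv_right (by norm_num)
  rcases eq_or_ne m 0 with rfl | hm
  · simpa using hfderiv.continuousAt.tendsto.isBigO_one ℝ
  obtain ⟨C, hC₀, hC⟩ := h.exists_nonneg
  obtain ⟨M, s, hs, hM⟩ := hfderiv.exists_lipschitzOnWith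
  have hdiff : ∀ᶠ y in 𝓝 z, DifferentiableAt ℝ f y :=
    (hf.eventually (by simp)).mono fun y hy ↦ hy.differentiableAt (by simp)
  obtain ⟨δ, hδ, hball⟩ := Metric.eventually_nhds_iff_ball.1 (hC.bound.and (hdiff.and hs))
  refine .of_bound (2 * C * 4 ^ m + M) ?_
  filter_upwards [ball_mem_nhds z (half_pos hδ), ball_mem_nhds z one_pos] with x hxδ hx₁
  rcases eq_or_ne x z with rfl | hxz
  · simp [(h.hasFDerivAt (by lia)).fderiv, hm]
  set r := ‖x - z‖
  have hr : 0 < r := norm_sub_pos_iff.2 hxz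
  have hrm : r ^ m ≤ r := pow_le_of_le_one hr.le (mem_ball_iff_norm.1 hx₁).le hm
  have hdist : ∀ y ∈ closedBall x (r ^ m), ‖y - z‖ ≤ 2 * r := fun y hy ↦ by
    linarith [norm_sub_le_norm_sub_add_norm_sub y x z, mem_closedBall_iff_norm.1 hy]
  have hsub : closedBall x (r ^ m) ⊆ ball z δ := fun y hy ↦ by
    rw [mem_ball_iff_norm] at hxδ ⊢
    linarith [hdist y hy]
  have hsize : ∀ y ∈ closedBall x (r ^ m), ‖f y‖ ≤ C * (2 * r) ^ (2 * m) := fun y hy ↦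
    calc ‖f y‖ ≤ C * ‖y - z‖ ^ (2 * m) := by simpa using (hball y (hsub hy)).1
      _ ≤ C * (2 * r) ^ (2 * m) := by gcongr; exact hdist y hy
  calc ‖fderiv ℝ f x‖ ≤ 2 * (C * (2 * r) ^ (2 * m)) / r ^ m + M * r ^ m :=
        norm_fderiv_le_of_lipschitzOnWith_closedBall (pow_pos hr m)
          (fun y hy ↦ (hball y (hsub hy)).2.1) hsize
          (hM.mono fun y hy ↦ (hball y (hsub hy)).2.2)
    _ = (2 * C * 4 ^ m + M) * r ^ m := by
        rw [mul_pow, pow_mul 2, pow_mul' r]; field_simp; norm_num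
    _ = (2 * C * 4 ^ m + M) * ‖r ^ m‖ := by rw [Real.norm_of_nonneg (by positivity)]

theorem isBigO_iteratedFDeriv_norm_sub_pow (hf : ContDiffAt ℝ ∞ f z)
    (h : ∀ m : ℕ, f =O[𝓝 z] fun y ↦ ‖y - z‖ ^ m) (k m : ℕ) :
    iteratedFDeriv ℝ k f =O[𝓝 z] fun y ↦ ‖y - z‖ ^ m := by
  induction k generalizing m with
  | zero => exact .of_norm_left (by simpa only [norm_iteratedFDeriv_zero] using (h m).norm_left)
  | succ k ih =>
    have hsmooth : ContDiffAt ℝ 2 (iteratedFDeriv ℝ k f) z :=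
      hf.iteratedFDeriv_right (WithTop.coe_le_coe.2 le_top)
    refine .of_norm_left ?_
    simpa only [norm_fderiv_iteratedFDeriv] using
      (isBigO_fderiv_norm_sub_pow hsmooth (ih (2 * m))).norm_left

theorem iteratedFDeriv_eq_zero_of_forall_isBigO_norm_sub_pow (hf : ContDiffAt ℝ ∞ f z)
    (h : ∀ m : ℕ, f =O[𝓝 z] fun y ↦ ‖y - z‖ ^ m) (k : ℕ) :
    iteratedFDeriv ℝ k f z = 0 :=
  (isBigO_iteratedFDeriv_norm_sub_pow hf h k 1).eq_zero_of_norm_pow one_ne_zero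

end NormedSpace

section Metric

variable {X : Type*} [PseudoMetricSpace X] {s : Set X}

theorem le_mul_infDist_pow {x : X} {a C : ℝ} {m : ℕ} (hs : s.Nonempty) (hC : 0 ≤ C)
    (h : ∀ z ∈ s, a ≤ C * dist x z ^ m) : a ≤ C * infDist x s ^ m := by
  have hlim : Tendsto (fun r : ℝ ↦ C * r ^ m) (𝓝[>] infDist x s) (𝓝 (C * infDist x s ^ m)) :=
    (by fun_prop : Continuous fun r : ℝ ↦ C * r ^ m).continuousWithinAt
  refine ge_of_tendsto hlim ?_
  filter_upwards [self_mem_nhdsWithin] with r hr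
  obtain ⟨z, hz, hzr⟩ := (infDist_lt_iff hs).1 hr
  exact (h z hz).trans (by gcongr)

theorem norm_le_mul_dist_pow_of_div_infDist_pow_le {F : Type*} [SeminormedAddCommGroup F]
    {f : X → F} {C : ℝ} {m : ℕ} (hs : IsClosed s) (hf : ∀ x ∈ s, ‖f x‖ = 0)
    (h : ∀ x ∉ s, ‖f x‖ / infDist x s ^ m ≤ C) (x : X) {z : X} (hz : z ∈ s) :
    ‖f x‖ ≤ |C| * dist x z ^ m := by
  by_cases hx : x ∈ s
  · rw [hf x hx]
    positivity
  have hpos : 0 < infDist x s := (hs.notMem_iff_infDist_pos ⟨z, hz⟩).1 hx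
  calc ‖f x‖ ≤ C * infDist x s ^ m := (div_le_iff₀ (by positivity)).1 (h x hx)
    _ ≤ |C| * dist x z ^ m := by
        gcongr
        exacts [le_abs_self C, infDist_le_dist_of_mem hz]

end Metric

theorem stmt_0_general {E F : Type*} [NormedAddCommGroup E] [NormedSpace ℝ E]
    [NormedAddCommGroup F] [NormedSpace ℝ F] {U : Set E} (hU : IsOpen U) (hUc : Uᶜ.Nonempty)
    {f : E → F} (hf : ContDiff ℝ ∞ f)
    (hbdd : ∀ m : ℕ, ∃ C, ∀ x, ‖iteratedFDeriv ℝ m f x‖ ≤ C) (hf0 : ∀ z ∉ U, f z = 0) :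
    (∀ z ∉ U, ∀ k : ℕ, iteratedFDeriv ℝ k f z = 0) ↔
      ∀ m : ℕ, ∃ C : ℝ, ∀ x ∈ U, ‖f x‖ / infDist x Uᶜ ^ m ≤ C := by
  constructor
  · intro hflat m
    obtain ⟨C, hC⟩ := hbdd m
    have hTaylor : ∀ x, ∀ z ∈ Uᶜ, ‖f x‖ ≤ C * dist x z ^ m := fun x z hz ↦ by
      simpa [dist_eq_norm] using norm_iteratedFDeriv_le_mul_norm_sub_pow convex_univ
        (fun y _ ↦ (hf.of_le (mod_cast le_top)).contDiffAt) (fun y _ ↦ hC y) (mem_univ z)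
        (fun i _ ↦ hflat z hz i) (zero_add m) (mem_univ x)
    have hC₀ : 0 ≤ C := (norm_nonneg _).trans (hC 0)
    exact ⟨C, fun x _ ↦
      div_le_of_le_mul₀ (pow_nonneg infDist_nonneg m) hC₀ (le_mul_infDist_pow hUc hC₀ (hTaylor x))⟩
  · intro h z hz
    refine iteratedFDeriv_eq_zero_of_forall_isBigO_norm_sub_pow hf.contDiffAt fun m ↦ ?_
    obtain ⟨C, hC⟩ := h m
    refine .of_bound |C| (.of_forall fun x ↦ ?_)
    simpa [dist_eq_norm] using norm_le_mul_dist_pow_of_div_infDist_pow_le hU.isClosed_compl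
      (fun y hy ↦ by simp [hf0 y hy]) (fun y hy ↦ hC y (not_not.1 hy)) x hz

/-- Let `U ⊆ ℝⁿ` be open with nonempty complement, and let `f` be a
Schwartz function on `ℝⁿ` vanishing on `ℝⁿ \ U`. Then `f` is flat at `ℝⁿ \ U`
(all iterated derivatives vanish there) iff for every `m` the quantity
`|f x| / dist(x, ℝⁿ \ U)^m` is bounded on `U`. -/
theorem stmt_0 (n : ℕ) (U : Set (EuclideanSpace ℝ (Fin n))) (hU : IsOpen U)
    (hUc : Uᶜ.Nonempty) (f : SchwartzMap (EuclideanSpace ℝ (Fin n)) ℝ)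
    (hf0 : ∀ z ∉ U, f z = 0) :
    (∀ z ∉ U, ∀ k : ℕ, iteratedFDeriv ℝ k f z = 0) ↔
      (∀ m : ℕ, ∃ C : ℝ, ∀ x ∈ U, |f x| / Metric.infDist x Uᶜ ^ m ≤ C) := by
  exact stmt_0_general hU hUc f.smooth'
    (fun m ↦ ⟨_, f.norm_iteratedFDeriv_le_seminorm ℝ m⟩) hf0
end

section
/- Let n ∈ ℕ, let U ⊆ ℝⁿ be an open subset, and let t : U → ℝ be a tempered function on U such that there exists c > 0 with t(x) ≥ c for all x ∈ U. Then the function x ↦ 1/t(x) is a tempered function on U. -/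
/-- A smooth function `t` on an open `U ⊆ ℝⁿ` is tempered:
(1) near every boundary point its derivatives grow at most like a negative power of the
distance to `ℝⁿ \ U`; (2) at infinity its derivatives are polynomially bounded. -/
def IsTemperedOn {n : ℕ} (U : Set (EuclideanSpace ℝ (Fin n)))
    (t : EuclideanSpace ℝ (Fin n) → ℝ) : Prop :=
  (∀ α : ℕ, ∀ x₀ ∉ U, ∃ V : Set (EuclideanSpace ℝ (Fin n)), IsOpen V ∧ x₀ ∈ V ∧
      ∃ (m : ℕ) (C : ℝ), ∀ x ∈ U ∩ V,
        ‖iteratedFDerivWithin ℝ α t U x‖ * Metric.infDist x Uᶜ ^ m ≤ C) ∧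
  (∀ α : ℕ, ∃ (m : ℕ) (r : ℝ), 0 < r ∧ ∀ x ∈ U, r < ‖x‖ →
      ‖iteratedFDerivWithin ℝ α t U x‖ < ‖x‖ ^ m)

/-!
Temperedness of `t` says that, along each end of `U` (a point outside `U`, or infinity), every
derivative of `t` is dominated by a power of a gauge `ρ` bounded away from zero: the inverse
distance to the complement in the first case, the norm in the second. For a fixed end, functions
dominated by powers of `ρ` are closed under sums and products, and the Faà di Bruno estimate bounds
a derivative of `1 / t` by a polynomial in the derivatives of `t` and in `1 / t` itself. Hence the
growth of `1 / t` alone decides whether it is tempered.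
-/

open Asymptotics Bornology Filter Metric Set
open scoped ContDiff Nat Topology

/-- Growth along a filter of at most polynomial order in a gauge `ρ`. It expresses both conditions
in the definition of a tempered function: `ρ` is the inverse distance to the complement at a
boundary point and the norm at infinity. -/
def HasPolynomialGrowth {α F : Type*} [Norm F] (l : Filter α) (ρ : α → ℝ) (f : α → F) : Prop :=
  ∃ m : ℕ, f =O[l] fun x => ρ x ^ m

/-- The growth conditions that temperedness on an open set `U` imposes on each single derivative.
At `x₀ ∉ closure U` the filter `𝓝[U] x₀` is trivial, so only boundary points and infinity count. -/
def HasTemperedGrowthOn {E F : Type*} [SeminormedAddCommGroup E] [Norm F] (U : Set E) (f : E → F) :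
    Prop :=
  (∀ x₀ ∉ U, HasPolynomialGrowth (𝓝[U] x₀) (fun x => (infDist x Uᶜ)⁻¹) f) ∧
    HasPolynomialGrowth (cobounded E ⊓ 𝓟 U) norm f

lemma pow_isBigO_pow_of_le {α : Type*} {l : Filter α} {ρ : α → ℝ}
    (hρ : (fun _ => (1 : ℝ)) =O[l] ρ) {m n : ℕ} (hmn : m ≤ n) :
    (fun x => ρ x ^ m) =O[l] fun x => ρ x ^ n := by
  simpa only [one_pow, mul_one, ← pow_add, Nat.add_sub_cancel' hmn] using
    (isBigO_refl (fun x => ρ x ^ m) l).mul (hρ.pow (n - m))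

namespace HasPolynomialGrowth

variable {α F R : Type*} [SeminormedAddCommGroup F] [SeminormedRing R] {l : Filter α} {ρ : α → ℝ}

lemma of_isBigO_one {f : α → F} (hf : f =O[l] fun _ => (1 : ℝ)) : HasPolynomialGrowth l ρ f :=
  ⟨0, by simpa only [pow_zero] using hf⟩

lemma const (c : F) : HasPolynomialGrowth l ρ fun _ => c :=
  of_isBigO_one (isBigO_const_const c one_ne_zero l)

lemma norm_left {f : α → F} (hf : HasPolynomialGrowth l ρ f) :
    HasPolynomialGrowth l ρ fun x => ‖f x‖ :=
  hf.imp fun _ hm => hm.norm_left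

lemma of_eventually_norm_le {f : α → F} {g : α → ℝ} (hg : HasPolynomialGrowth l ρ g)
    (hfg : ∀ᶠ x in l, ‖f x‖ ≤ g x) : HasPolynomialGrowth l ρ f :=
  hg.imp fun _ hm => (IsBigO.of_norm_eventuallyLE hfg).trans hm

lemma mul {f g : α → R} (hf : HasPolynomialGrowth l ρ f) (hg : HasPolynomialGrowth l ρ g) :
    HasPolynomialGrowth l ρ fun x => f x * g x := by
  obtain ⟨m, hm⟩ := hf
  obtain ⟨n, hn⟩ := hg
  exact ⟨m + n, by simpa only [pow_add] using hm.mul hn⟩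

lemma pow {f : α → R} (hf : HasPolynomialGrowth l ρ f) (k : ℕ) :
    HasPolynomialGrowth l ρ fun x => f x ^ k := by
  induction k with
  | zero => simpa only [pow_zero] using const 1
  | succ k ih => simpa only [pow_succ] using ih.mul hf

lemma add (hρ : (fun _ => (1 : ℝ)) =O[l] ρ) {f g : α → F} (hf : HasPolynomialGrowth l ρ f)
    (hg : HasPolynomialGrowth l ρ g) : HasPolynomialGrowth l ρ fun x => f x + g x := by
  obtain ⟨m, hm⟩ := hf
  obtain ⟨n, hn⟩ := hg
  exact ⟨m + n, (hm.trans (pow_isBigO_pow_of_le hρ (m.le_add_right n))).add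
    (hn.trans (pow_isBigO_pow_of_le hρ (n.le_add_left m)))⟩

lemma sum (hρ : (fun _ => (1 : ℝ)) =O[l] ρ) {ι : Type*} (s : Finset ι) {f : ι → α → F}
    (hf : ∀ i ∈ s, HasPolynomialGrowth l ρ (f i)) :
    HasPolynomialGrowth l ρ fun x => ∑ i ∈ s, f i x := by
  classical
  induction s using Finset.induction_on with
  | empty => simpa only [Finset.sum_empty] using const 0
  | insert i s his ih =>
    simp only [Finset.sum_insert his]
    exact (hf i (s.mem_insert_self i)).add hρ (ih fun j hj => hf j (Finset.mem_insert_of_mem hj))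

end HasPolynomialGrowth

section Derivatives

variable {𝕜 E F G : Type*} [NontriviallyNormedField 𝕜] [NormedAddCommGroup E] [NormedSpace 𝕜 E]
  [NormedAddCommGroup F] [NormedSpace 𝕜 F] [NormedAddCommGroup G] [NormedSpace 𝕜 G]
  {U : Set E} {l : Filter E} {ρ : E → ℝ} {k : ℕ}

lemma norm_iteratedFDerivWithin_comp_le_sum {g : F → G} {f : E → F} {S : Set F}
    (hg : ContDiffOn 𝕜 k g S) (hf : ContDiffOn 𝕜 k f U) (hS : UniqueDiffOn 𝕜 S)
    (hU : UniqueDiffOn 𝕜 U) (hfS : MapsTo f U S) {x : E} (hx : x ∈ U) :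
    ‖iteratedFDerivWithin 𝕜 k (g ∘ f) U x‖ ≤
      k ! * (∑ i ∈ Finset.range (k + 1), ‖iteratedFDerivWithin 𝕜 i g S (f x)‖) *
        (1 + ∑ i ∈ Finset.range (k + 1), ‖iteratedFDerivWithin 𝕜 i f U x‖) ^ k := by
  have le_sum (a : ℕ → ℝ) (ha : ∀ i, 0 ≤ a i) {i : ℕ} (hi : i ≤ k) :
      a i ≤ ∑ j ∈ Finset.range (k + 1), a j :=
    Finset.single_le_sum (fun j _ => ha j) (Finset.mem_range_succ_iff.2 hi)
  refine norm_iteratedFDerivWithin_comp_le hg hf le_rfl hS hU hfS hx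
    (fun i hi => le_sum (fun j => ‖iteratedFDerivWithin 𝕜 j g S (f x)‖) (fun _ => norm_nonneg _) hi)
    fun i hi₁ hi => ?_
  calc ‖iteratedFDerivWithin 𝕜 i f U x‖
      ≤ 1 + ∑ j ∈ Finset.range (k + 1), ‖iteratedFDerivWithin 𝕜 j f U x‖ :=
        (le_sum (fun j => ‖iteratedFDerivWithin 𝕜 j f U x‖) (fun _ => norm_nonneg _) hi).trans
          (le_add_of_nonneg_left zero_le_one)
    _ ≤ (1 + ∑ j ∈ Finset.range (k + 1), ‖iteratedFDerivWithin 𝕜 j f U x‖) ^ i :=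
        le_self_pow₀ (le_add_of_nonneg_right (by positivity)) (by lia)

lemma HasPolynomialGrowth.iteratedFDerivWithin_comp (hρ : (fun _ => (1 : ℝ)) =O[l] ρ)
    (hl : ∀ᶠ x in l, x ∈ U) {g : F → G} {f : E → F} {S : Set F} (hg : ContDiffOn 𝕜 k g S)
    (hf : ContDiffOn 𝕜 k f U) (hS : UniqueDiffOn 𝕜 S) (hU : UniqueDiffOn 𝕜 U) (hfS : MapsTo f U S)
    (hg' : ∀ i ≤ k, HasPolynomialGrowth l ρ fun x => iteratedFDerivWithin 𝕜 i g S (f x))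
    (hf' : ∀ i ≤ k, HasPolynomialGrowth l ρ (iteratedFDerivWithin 𝕜 i f U)) :
    HasPolynomialGrowth l ρ (iteratedFDerivWithin 𝕜 k (g ∘ f) U) := by
  have outer := HasPolynomialGrowth.sum hρ (Finset.range (k + 1)) fun i hi =>
    (hg' i (Finset.mem_range_succ_iff.1 hi)).norm_left
  have inner := HasPolynomialGrowth.sum hρ (Finset.range (k + 1)) fun i hi =>
    (hf' i (Finset.mem_range_succ_iff.1 hi)).norm_left
  refine of_eventually_norm_le
    (((const (k ! : ℝ)).mul outer).mul (((const 1).add hρ inner).pow k)) ?_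
  filter_upwards [hl] with x hx
  exact norm_iteratedFDerivWithin_comp_le_sum hg hf hS hU hfS hx

lemma norm_iteratedFDerivWithin_one_div {S : Set 𝕜} (hS : IsOpen S) {y : 𝕜} (hy : y ∈ S) :
    ‖iteratedFDerivWithin 𝕜 k (fun z : 𝕜 => 1 / z) S y‖ = ‖(k ! : 𝕜)‖ * ‖1 / y‖ ^ (k + 1) := by
  have hexp : (-1 - k : ℤ) = -((k + 1 : ℕ) : ℤ) := by lia
  rw [norm_iteratedFDerivWithin_eq_norm_iteratedDerivWithin, iteratedDerivWithin_one_div k hS hy]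
  simp only [hexp, zpow_neg, zpow_natCast, norm_mul, norm_pow, norm_neg, norm_one, one_pow,
    one_mul, norm_inv, one_div, inv_pow]

lemma HasPolynomialGrowth.iteratedFDerivWithin_one_div (hρ : (fun _ => (1 : ℝ)) =O[l] ρ)
    (hl : ∀ᶠ x in l, x ∈ U) {f : E → 𝕜} (hf : ContDiffOn 𝕜 k f U) (hU : UniqueDiffOn 𝕜 U)
    (hf₀ : ∀ x ∈ U, f x ≠ 0) (hf' : ∀ i ≤ k, HasPolynomialGrowth l ρ (iteratedFDerivWithin 𝕜 i f U))
    (hinv : HasPolynomialGrowth l ρ fun x => 1 / f x) :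
    HasPolynomialGrowth l ρ (iteratedFDerivWithin 𝕜 k (fun x => 1 / f x) U) := by
  have hone_div : ContDiffOn 𝕜 k (fun y : 𝕜 => 1 / y) {0}ᶜ :=
    contDiffOn_const.div contDiffOn_id fun _ hy => hy
  refine iteratedFDerivWithin_comp hρ hl hone_div hf isOpen_compl_singleton.uniqueDiffOn hU hf₀
    (fun i _ => ?_) hf'
  refine ((const ‖(i ! : 𝕜)‖).mul (hinv.norm_left.pow (i + 1))).of_eventually_norm_le ?_
  filter_upwards [hl] with x hx
  exact (norm_iteratedFDerivWithin_one_div isOpen_compl_singleton (hf₀ x hx)).le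

end Derivatives

section Ends

lemma infDist_compl_pos {E : Type*} [PseudoMetricSpace E] {U : Set E} (hU : IsOpen U) {x x₀ : E}
    (hx₀ : x₀ ∉ U) (hx : x ∈ U) : 0 < infDist x Uᶜ :=
  (hU.isClosed_compl.notMem_iff_infDist_pos ⟨x₀, hx₀⟩).1 (notMem_compl_iff.2 hx)

lemma one_isBigO_inv_infDist_compl {E : Type*} [PseudoMetricSpace E] {U : Set E} (hU : IsOpen U)
    {x₀ : E} (hx₀ : x₀ ∉ U) :
    (fun _ => (1 : ℝ)) =O[𝓝[U] x₀] fun x => (infDist x Uᶜ)⁻¹ := by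
  refine IsBigO.of_norm_eventuallyLE ?_
  filter_upwards [self_mem_nhdsWithin, mem_nhdsWithin_of_mem_nhds (ball_mem_nhds x₀ one_pos)]
    with x hxU hx
  rw [norm_one]
  exact (one_le_inv₀ (infDist_compl_pos hU hx₀ hxU)).2
    ((infDist_le_dist_of_mem (mem_compl hx₀)).trans (mem_ball.1 hx).le)

lemma one_isBigO_norm_cobounded {E : Type*} [SeminormedAddCommGroup E] :
    (fun _ => (1 : ℝ)) =O[cobounded E] (norm : E → ℝ) :=
  IsBigO.of_norm_eventuallyLE <|
    (tendsto_norm_cobounded_atTop.eventually_ge_atTop 1).mono fun _ hx => norm_one.trans_le hx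

lemma hasPolynomialGrowth_nhdsWithin_iff {E F : Type*} [PseudoMetricSpace E] [Norm F]
    {U : Set E} (hU : IsOpen U) {x₀ : E} (hx₀ : x₀ ∉ U) {f : E → F} :
    HasPolynomialGrowth (𝓝[U] x₀) (fun x => (infDist x Uᶜ)⁻¹) f ↔
      ∃ V, IsOpen V ∧ x₀ ∈ V ∧ ∃ (m : ℕ) (C : ℝ), ∀ x ∈ U ∩ V, ‖f x‖ * infDist x Uᶜ ^ m ≤ C := by
  have mul_le_iff {m : ℕ} {C : ℝ} {x : E} (hx : x ∈ U) :
      ‖f x‖ * infDist x Uᶜ ^ m ≤ C ↔ ‖f x‖ ≤ C * ‖(infDist x Uᶜ)⁻¹ ^ m‖ := by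
    have hpos : 0 < infDist x Uᶜ ^ m := pow_pos (infDist_compl_pos hU hx₀ hx) m
    rw [inv_pow, norm_inv, Real.norm_of_nonneg hpos.le, ← div_eq_mul_inv, le_div_iff₀ hpos]
  constructor
  · rintro ⟨m, hm⟩
    obtain ⟨C, hC⟩ := hm.bound
    obtain ⟨V, hV, hx₀V, hVU⟩ := mem_nhdsWithin.1 hC
    exact ⟨V, hV, hx₀V, m, C, fun x hx => (mul_le_iff hx.1).2 (hVU hx.symm)⟩
  · rintro ⟨V, hV, hx₀V, m, C, hC⟩
    refine ⟨m, IsBigO.of_bound C ?_⟩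
    filter_upwards [self_mem_nhdsWithin, mem_nhdsWithin_of_mem_nhds (hV.mem_nhds hx₀V)]
      with x hxU hxV
    exact (mul_le_iff hxU).1 (hC x ⟨hxU, hxV⟩)

lemma hasPolynomialGrowth_cobounded_inf_principal_iff {E F : Type*} [SeminormedAddCommGroup E]
    [Norm F] {U : Set E} {f : E → F} :
    HasPolynomialGrowth (cobounded E ⊓ 𝓟 U) norm f ↔
      ∃ (m : ℕ) (r : ℝ), 0 < r ∧ ∀ x ∈ U, r < ‖x‖ → ‖f x‖ < ‖x‖ ^ m := by
  constructor
  · rintro ⟨m, hm⟩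
    obtain ⟨C, hC⟩ := hm.bound
    obtain ⟨r, -, hr⟩ := hasBasis_cobounded_norm.eventually_iff.1 (eventually_inf_principal.1 hC)
    refine ⟨m + 1, max (max r C) 1, by positivity, fun x hxU hx => ?_⟩
    obtain ⟨⟨hrx, hCx⟩, h1x⟩ : (r < ‖x‖ ∧ C < ‖x‖) ∧ 1 < ‖x‖ := by simpa only [max_lt_iff] using hx
    have hpow : 0 < ‖x‖ ^ m := pow_pos (one_pos.trans h1x) m
    calc ‖f x‖ ≤ C * ‖x‖ ^ m := by
          simpa only [norm_pow, norm_norm] using hr hrx.le hxU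
      _ < ‖x‖ * ‖x‖ ^ m := mul_lt_mul_of_pos_right hCx hpow
      _ = ‖x‖ ^ (m + 1) := (pow_succ' _ _).symm
  · rintro ⟨m, r, -, hr⟩
    refine ⟨m, IsBigO.of_norm_eventuallyLE (eventually_inf_principal.2 ?_)⟩
    filter_upwards [tendsto_norm_cobounded_atTop.eventually_gt_atTop r] with x hx hxU
    exact (hr x hxU hx).le

end Ends

lemma HasTemperedGrowthOn.of_forall_norm_le {E F : Type*} [SeminormedAddCommGroup E]
    [SeminormedAddCommGroup F] {U : Set E} {f : E → F} {C : ℝ} (hf : ∀ x ∈ U, ‖f x‖ ≤ C) :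
    HasTemperedGrowthOn U f := by
  have hbound : f =O[𝓟 U] fun _ => (1 : ℝ) :=
    IsBigO.of_bound C <| eventually_principal.2 <| by simpa only [norm_one, mul_one] using hf
  exact ⟨fun _ _ => .of_isBigO_one (hbound.mono inf_le_right),
    .of_isBigO_one (hbound.mono inf_le_right)⟩

lemma HasTemperedGrowthOn.one_div_of_le_norm {E R : Type*} [SeminormedAddCommGroup E]
    [NormedDivisionRing R] {U : Set E} {f : E → R} {c : ℝ} (hc : 0 < c)
    (hf : ∀ x ∈ U, c ≤ ‖f x‖) : HasTemperedGrowthOn U fun x => 1 / f x := by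
  refine of_forall_norm_le (C := 1 / c) fun x hx => ?_
  rw [norm_div, norm_one]
  exact one_div_le_one_div_of_le hc (hf x hx)

lemma isTemperedOn_iff {n : ℕ} {U : Set (EuclideanSpace ℝ (Fin n))} (hU : IsOpen U)
    {t : EuclideanSpace ℝ (Fin n) → ℝ} :
    IsTemperedOn U t ↔ ∀ k : ℕ, HasTemperedGrowthOn U (iteratedFDerivWithin ℝ k t U) := by
  simp only [HasTemperedGrowthOn, hasPolynomialGrowth_cobounded_inf_principal_iff, forall_and]
  exact and_congr_left' <| forall₃_congr fun _ _ hx₀ =>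
    (hasPolynomialGrowth_nhdsWithin_iff hU hx₀).symm

theorem stmt_4_general {n : ℕ} {U : Set (EuclideanSpace ℝ (Fin n))} (hU : IsOpen U)
    {t : EuclideanSpace ℝ (Fin n) → ℝ} (ht : ContDiffOn ℝ ∞ t U) (htemp : IsTemperedOn U t)
    (ht₀ : ∀ x ∈ U, t x ≠ 0) (hinv : HasTemperedGrowthOn U fun x => 1 / t x) :
    IsTemperedOn U (fun x => 1 / t x) := by
  rw [isTemperedOn_iff hU] at htemp ⊢
  intro k
  have htk : ContDiffOn ℝ k t U := ht.of_le (mod_cast le_top)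
  constructor
  · intro x₀ hx₀
    exact .iteratedFDerivWithin_one_div (one_isBigO_inv_infDist_compl hU hx₀) self_mem_nhdsWithin
      htk hU.uniqueDiffOn ht₀ (fun i _ => (htemp i).1 x₀ hx₀) (hinv.1 x₀ hx₀)
  · exact .iteratedFDerivWithin_one_div (one_isBigO_norm_cobounded.mono inf_le_left)
      (mem_inf_of_right (mem_principal_self U)) htk hU.uniqueDiffOn ht₀ (fun i _ => (htemp i).2)
      hinv.2

/-- A tempered function on `U` which is bounded below by a positive
constant has tempered pointwise inverse. -/
theorem stmt_4 (n : ℕ) (U : Set (EuclideanSpace ℝ (Fin n))) (hU : IsOpen U)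
    (t : EuclideanSpace ℝ (Fin n) → ℝ) (ht : ContDiffOn ℝ (⊤ : ℕ∞) t U)
    (htemp : IsTemperedOn U t) (c : ℝ) (hc : 0 < c) (hct : ∀ x ∈ U, c ≤ t x) :
    IsTemperedOn U (fun x => 1 / t x) := by
  exact stmt_4_general hU ht htemp (fun x hx => (hc.trans_le (hct x hx)).ne')
    (.one_div_of_le_norm hc fun x hx => (hct x hx).trans (Real.le_norm_self _))
end

section
/- Let n ∈ ℕ, let U' ⊆ U ⊆ ℝⁿ be open subsets, let t : U → ℝ be a smooth function such that for every f ∈ 𝒮(U) the function equal to t·f on U and to 0 outside U lies in 𝒮(U), and suppose that the closure in U of the set {x ∈ U : t(x) ≠ 0} is contained in U'. Then for every s ∈ 𝒮(U), the function equal to t(x)·s(x) on U' and to 0 on ℝⁿ \ U' belongs to 𝒮(U'). -/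
/-- `f ∈ 𝒮(U)`: a Schwartz function on `ℝⁿ` which is flat at `ℝⁿ \ U`. -/
def SchwartzFlatOn {n : ℕ} (U : Set (EuclideanSpace ℝ (Fin n)))
    (f : SchwartzMap (EuclideanSpace ℝ (Fin n)) ℝ) : Prop :=
  ∀ z ∉ U, ∀ k : ℕ, iteratedFDeriv ℝ k (⇑f) z = 0

/-!
The product `g` of `t` and `s` vanishes outside `{x ∈ U | t x ≠ 0}`, so a point outside `U'` lies
either outside `U`, where `g` is already flat, or outside the topological support of `g`, where
every derivative of `g` vanishes because `g` is locally zero.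
-/

open Function
open scoped SchwartzMap

section Flat

variable {𝕜 E F : Type*} [NontriviallyNormedField 𝕜] [NormedAddCommGroup E] [NormedSpace 𝕜 E]
  [NormedAddCommGroup F] [NormedSpace 𝕜 F] {U V : Set E} {f : E → F}

variable (𝕜) in
/-- `f` is flat outside `U`: all its iterated derivatives, `f` itself included, vanish there.
This extends the flatness condition of `SchwartzFlatOn` to arbitrary functions between normed
spaces; no regularity of `f` is built in. -/
def IsFlatOff (U : Set E) (f : E → F) : Prop :=
  ∀ z ∉ U, ∀ k : ℕ, iteratedFDeriv 𝕜 k f z = 0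

theorem IsFlatOff.apply_eq_zero (hf : IsFlatOff 𝕜 U f) {x : E} (hx : x ∉ U) : f x = 0 := by
  rw [← iteratedFDeriv_zero_apply (𝕜 := 𝕜) (f := f) (x := x) 0, hf x hx 0, zero_apply]

theorem IsFlatOff.support_subset (hf : IsFlatOff 𝕜 U f) : support f ⊆ U :=
  support_subset_iff'.mpr fun _ => hf.apply_eq_zero

theorem iteratedFDeriv_of_notMem_tsupport {x : E} (hx : x ∉ tsupport f) (k : ℕ) :
    iteratedFDeriv 𝕜 k f x = 0 :=
  notMem_support.mp fun hk => hx (support_iteratedFDeriv_subset k hk)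

theorem IsFlatOff.of_tsupport_inter_subset (hf : IsFlatOff 𝕜 U f) (hV : tsupport f ∩ U ⊆ V) :
    IsFlatOff 𝕜 V f := by
  intro x hxV k
  by_cases hxU : x ∈ U
  · exact iteratedFDeriv_of_notMem_tsupport (fun hx => hxV (hV ⟨hx, hxU⟩)) k
  · exact hf x hxU k

end Flat

theorem stmt_5_general {E F R : Type*} [NormedAddCommGroup E] [NormedSpace ℝ E]
    [NormedAddCommGroup F] [NormedSpace ℝ F] [Zero R] [SMulWithZero R F]
    {U U' : Set E} {t : E → R}
    (htemp : ∀ f : 𝓢(E, F), IsFlatOff ℝ U f →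
      ∃ g : 𝓢(E, F), (∀ x ∈ U, g x = t x • f x) ∧ (∀ x ∉ U, g x = 0) ∧ IsFlatOff ℝ U g)
    (hsupp : closure {x ∈ U | t x ≠ 0} ∩ U ⊆ U') (s : 𝓢(E, F)) (hs : IsFlatOff ℝ U s) :
    ∃ g : 𝓢(E, F), (∀ x ∈ U', g x = t x • s x) ∧ (∀ x ∉ U', g x = 0) ∧ IsFlatOff ℝ U' g := by
  obtain ⟨g, hg_mul, hg_zero, hg_flat⟩ := htemp s hs
  have hg_eq : ⇑g = fun x => t x • s x := by
    funext x
    by_cases hxU : x ∈ U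
    · exact hg_mul x hxU
    · rw [hg_zero x hxU, hs.apply_eq_zero hxU, smul_zero]
  have hg_tsupport : tsupport g ⊆ closure {x ∈ U | t x ≠ 0} := by
    rw [tsupport, hg_eq]
    exact closure_mono fun _ hx =>
      ⟨hs.support_subset (support_smul_subset_right t s hx), support_smul_subset_left t s hx⟩
  have hg_flat' : IsFlatOff ℝ U' g :=
    hg_flat.of_tsupport_inter_subset ((Set.inter_subset_inter_left U hg_tsupport).trans hsupp)
  exact ⟨g, fun x _ => congrFun hg_eq x, fun _ => hg_flat'.apply_eq_zero, hg_flat'⟩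

/-- Let `U' ⊆ U ⊆ ℝⁿ` be open, and let `t` be a smooth function on `U`
such that multiplication by `t` (and extension by zero) preserves `𝒮(U)`, whose support
(the closure in `U` of its non-vanishing locus) is contained in `U'`. Then for every
`s ∈ 𝒮(U)`, the extension by zero of `(t·s)|_{U'}` belongs to `𝒮(U')`. -/
theorem stmt_5 (n : ℕ) (U U' : Set (EuclideanSpace ℝ (Fin n))) (hU : IsOpen U)
    (hU' : IsOpen U') (hsub : U' ⊆ U)
    (t : EuclideanSpace ℝ (Fin n) → ℝ) (ht : ContDiffOn ℝ (⊤ : ℕ∞) t U)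
    (htemp : ∀ f : SchwartzMap (EuclideanSpace ℝ (Fin n)) ℝ, SchwartzFlatOn U f →
      ∃ g : SchwartzMap (EuclideanSpace ℝ (Fin n)) ℝ,
        (∀ x ∈ U, g x = t x * f x) ∧ (∀ x ∉ U, g x = 0) ∧ SchwartzFlatOn U g)
    (hsupp : closure {x ∈ U | t x ≠ 0} ∩ U ⊆ U') :
    ∀ s : SchwartzMap (EuclideanSpace ℝ (Fin n)) ℝ, SchwartzFlatOn U s →
      ∃ g : SchwartzMap (EuclideanSpace ℝ (Fin n)) ℝ,
        (∀ x ∈ U', g x = t x * s x) ∧ (∀ x ∉ U', g x = 0) ∧ SchwartzFlatOn U' g :=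
  stmt_5_general htemp hsupp
end

section
/- Let n ∈ ℕ and let Z ⊆ ℝⁿ be a closed subset. Then there exists a smooth function f : ℝⁿ → ℝ such that f(x) > 0 for every x ∉ Z, and f is flat at Z, i.e. for every z ∈ Z and every k ∈ ℕ the k-th iterated derivative of f at z is zero (in particular f vanishes on Z). -/
/-! Compose a smooth `g ≥ 0` whose support is exactly `Zᶜ` with the function `x ↦ exp (-1 / x)`,
extended by zero to `x ≤ 0`. The latter is positive for `x > 0` and flat at `0`, and by the
Faà di Bruno formula every term of every derivative of the composition at a zero of `g` contains a
derivative of the outer function at `0`. -/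

open scoped ContDiff Topology

section Flat

variable {𝕜 E F G : Type*} [NontriviallyNormedField 𝕜] [NormedAddCommGroup E] [NormedSpace 𝕜 E]
  [NormedAddCommGroup F] [NormedSpace 𝕜 F] [NormedAddCommGroup G] [NormedSpace 𝕜 G]

variable (𝕜) in
/-- Flatness of `f` at `x`: all iterated derivatives vanish there, including the value `f x`, which
is the one of order `0`. This is meaningful for `f` smooth at `x`, as `iteratedFDeriv` is `0` where
a derivative does not exist. -/
def IsFlatAt (f : E → F) (x : E) : Prop :=
  ∀ k : ℕ, iteratedFDeriv 𝕜 k f x = 0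

theorem isFlatAt_of_eventuallyEq_zero {f : E → F} {x : E} (hf : f =ᶠ[𝓝 x] 0) :
    IsFlatAt 𝕜 f x := fun k ↦ by
  rw [(hf.iteratedFDeriv 𝕜 k).eq_of_nhds, iteratedFDeriv_zero, Pi.zero_apply]

theorem isClosed_setOf_isFlatAt {f : E → F} (hf : ContDiff 𝕜 ∞ f) :
    IsClosed {x | IsFlatAt 𝕜 f x} := by
  simp only [IsFlatAt, Set.ofPred_forall]
  exact isClosed_iInter fun k ↦
    isClosed_eq (hf.continuous_iteratedFDeriv (mod_cast le_top)) continuous_const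

theorem isFlatAt_of_eqOn_zero_of_mem_closure {f : E → F} {U : Set E} {x : E}
    (hf : ContDiff 𝕜 ∞ f) (hU : IsOpen U) (hfU : Set.EqOn f 0 U) (hx : x ∈ closure U) :
    IsFlatAt 𝕜 f x :=
  closure_minimal
    (fun _ hy ↦ isFlatAt_of_eventuallyEq_zero (hfU.eventuallyEq_of_mem (hU.mem_nhds hy)))
    (isClosed_setOf_isFlatAt hf) hx

theorem IsFlatAt.comp {g : F → G} {f : E → F} {x : E} (hg_flat : IsFlatAt 𝕜 g (f x))
    (hg : ContDiffAt 𝕜 ∞ g (f x)) (hf : ContDiffAt 𝕜 ∞ f x) : IsFlatAt 𝕜 (g ∘ f) x := by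
  intro k
  rw [iteratedFDeriv_comp hg hf (mod_cast le_top)]
  refine Finset.sum_eq_zero fun c _ ↦ ?_
  ext v
  simp [ftaylorSeries, hg_flat c.length]

end Flat

theorem isFlatAt_expNegInvGlue {x : ℝ} (hx : x ≤ 0) : IsFlatAt ℝ expNegInvGlue x :=
  isFlatAt_of_eqOn_zero_of_mem_closure expNegInvGlue.contDiff isOpen_Iio
    (fun _ hy ↦ expNegInvGlue.zero_of_nonpos (Set.mem_Iio.mp hy).le)
    (closure_Iio (0 : ℝ) ▸ Set.mem_Iic.mpr hx)

theorem stmt_9_general {E : Type*} [NormedAddCommGroup E] [NormedSpace ℝ E]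
    [FiniteDimensional ℝ E] {Z : Set E} (hZ : IsClosed Z) :
    ∃ f : E → ℝ, ContDiff ℝ ∞ f ∧ (∀ x ∉ Z, 0 < f x) ∧ ∀ z ∈ Z, IsFlatAt ℝ f z := by
  obtain ⟨g, g_support, g_smooth, g_range⟩ :=
    hZ.isOpen_compl.exists_contDiff_support_eq (n := ⊤)
  have g_nonneg (x : E) : 0 ≤ g x := (g_range (Set.mem_range_self x)).1
  have g_ne_zero_iff (x : E) : g x ≠ 0 ↔ x ∉ Z := Set.ext_iff.mp g_support x
  refine ⟨expNegInvGlue ∘ g, expNegInvGlue.contDiff.comp g_smooth, fun x hx ↦ ?_, fun z hz ↦ ?_⟩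
  · exact expNegInvGlue.pos_of_pos ((g_nonneg x).lt_of_ne' ((g_ne_zero_iff x).mpr hx))
  · have g_zero : g z = 0 := not_ne_iff.mp fun h ↦ (g_ne_zero_iff z).mp h hz
    exact (isFlatAt_expNegInvGlue g_zero.le).comp expNegInvGlue.contDiff.contDiffAt
      g_smooth.contDiffAt

/-- For every closed subset `Z ⊆ ℝⁿ` there is a smooth function
`f : ℝⁿ → ℝ` which is strictly positive off `Z` and flat at `Z` (all iterated
derivatives, including order `0`, vanish at every point of `Z`). -/
theorem stmt_9 (n : ℕ) (Z : Set (EuclideanSpace ℝ (Fin n))) (hZ : IsClosed Z) :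
    ∃ f : EuclideanSpace ℝ (Fin n) → ℝ,
      ContDiff ℝ (⊤ : ℕ∞) f ∧ (∀ x ∉ Z, 0 < f x) ∧
        ∀ z ∈ Z, ∀ k : ℕ, iteratedFDeriv ℝ k f z = 0 :=
  stmt_9_general hZ
end

section
/- Let n ∈ ℕ and let U ⊆ ℝⁿ be an open subset. Then there exists a Schwartz function f on ℝⁿ such that every iterated derivative of f vanishes at every point of ℝⁿ \ U (f is flat at ℝⁿ \ U) and f(x) > 0 for every x ∈ U; that is, there exists f ∈ 𝒮(U) which is strictly positive on all of U. -/
/-!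
Cover `U` by the positivity sets of countably many nonnegative bump functions `g i` with
`tsupport (g i) ⊆ U`. Since only countably many seminorms define the Schwartz topology, a diagonal
argument yields positive weights `r i` for which `∑ i, r i • g i` converges in every seminorm.
The sum can be differentiated termwise, so it is flat off `U`, and it is positive on `U`.
-/

open Filter Set SchwartzMap Topology
open scoped ContDiff

section Weights

variable {ι κ : Type*} [Countable ι] [Countable κ]

theorem exists_forall_eventually_cofinite_le {β : Type*} [Preorder β] [IsDirectedOrder β]
    [Nonempty β] (a : ι → κ → β) : ∃ b : κ → β, ∀ i, ∀ᶠ n in cofinite, a i n ≤ b n := by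
  obtain ⟨e, he⟩ := exists_injective_nat ι
  obtain ⟨d, hd⟩ := exists_injective_nat κ
  have bddAbove_diagonal (n : κ) : BddAbove ((a · n) '' {i | e i ≤ d n}) :=
    (((finite_Iic (d n)).preimage he.injOn).image _).bddAbove
  choose b hb using bddAbove_diagonal
  refine ⟨b, fun i => ?_⟩
  have eventually_le : ∀ᶠ n in cofinite, e i ≤ d n :=
    (hd.tendsto_cofinite.mono_right Nat.cofinite_eq_atTop.le).eventually_ge_atTop (e i)
  filter_upwards [eventually_le] with n hn
  exact hb n (mem_image_of_mem (a · n) hn)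

theorem exists_pos_forall_summable_mul (a : ι → κ → ℝ) :
    ∃ r : κ → ℝ, (∀ n, 0 < r n) ∧ ∀ i, Summable fun n => r n * a i n := by
  obtain ⟨b, hb⟩ := exists_forall_eventually_cofinite_le fun i n => |a i n|
  obtain ⟨δ, hδ_pos, c, hδ_sum, -⟩ := NNReal.exists_pos_sum_of_countable one_ne_zero κ
  have max_pos (n : κ) : 0 < max 1 (b n) := zero_lt_one.trans_le (le_max_left _ _)
  have weight_pos (n : κ) : 0 < δ n / max 1 (b n) := div_pos (hδ_pos n) (max_pos n)
  refine ⟨fun n => δ n / max 1 (b n), weight_pos, fun i => ?_⟩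
  refine (NNReal.summable_coe.2 hδ_sum.summable).of_norm_bounded_eventually ?_
  filter_upwards [hb i] with n hn
  calc ‖δ n / max 1 (b n) * a i n‖ = δ n / max 1 (b n) * |a i n| := by
        rw [norm_mul, Real.norm_of_nonneg (weight_pos n).le, Real.norm_eq_abs]
    _ ≤ δ n / max 1 (b n) * max 1 (b n) :=
        mul_le_mul_of_nonneg_left (hn.trans (le_max_right _ _)) (weight_pos n).le
    _ = δ n := div_mul_cancel₀ _ (max_pos n).ne'

end Weights

section Series

variable {ι E F : Type*} [NormedAddCommGroup E] [NormedSpace ℝ E]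
  [NormedAddCommGroup F] [NormedSpace ℝ F] [CompleteSpace F]

theorem exists_schwartzMap_hasSum_iteratedFDeriv {g : ι → 𝓢(E, F)}
    (hg : ∀ k l, Summable fun i => SchwartzMap.seminorm ℝ k l (g i)) :
    ∃ f : 𝓢(E, F), ∀ l x,
      HasSum (fun i => iteratedFDeriv ℝ l (g i) x) (iteratedFDeriv ℝ l f x) := by
  have smooth (i : ι) : ContDiff ℝ ∞ (g i) := (g i).smooth ⊤
  have bound (l : ℕ) (i : ι) (x : E) :
      ‖iteratedFDeriv ℝ l (g i) x‖ ≤ SchwartzMap.seminorm ℝ 0 l (g i) :=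
    norm_iteratedFDeriv_le_seminorm ℝ (g i) l x
  have hasSum_iteratedFDeriv (l : ℕ) (x : E) : HasSum (fun i => iteratedFDeriv ℝ l (g i) x)
      (iteratedFDeriv ℝ l (fun y => ∑' i, g i y) x) := by
    rw [iteratedFDeriv_tsum_apply (N := ⊤) smooth (fun l _ => hg 0 l)
      (fun l i x _ => bound l i x) le_top x]
    exact (Summable.of_norm_bounded (hg 0 l) (bound l · x)).hasSum
  have decay (k l : ℕ) (x : E) : ‖x‖ ^ k * ‖iteratedFDeriv ℝ l (fun y => ∑' i, g i y) x‖ ≤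
      ∑' i, SchwartzMap.seminorm ℝ k l (g i) := by
    have decay_term (i : ι) : ‖‖x‖ ^ k • iteratedFDeriv ℝ l (g i) x‖ ≤
        SchwartzMap.seminorm ℝ k l (g i) := by
      rw [norm_smul, norm_pow, norm_norm]
      exact le_seminorm ℝ k l (g i) x
    calc ‖x‖ ^ k * ‖iteratedFDeriv ℝ l (fun y => ∑' i, g i y) x‖
        = ‖∑' i, ‖x‖ ^ k • iteratedFDeriv ℝ l (g i) x‖ := by
          rw [((hasSum_iteratedFDeriv l x).const_smul (‖x‖ ^ k)).tsum_eq, norm_smul, norm_pow,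
            norm_norm]
      _ ≤ ∑' i, SchwartzMap.seminorm ℝ k l (g i) :=
          tsum_of_norm_bounded (hg k l).hasSum decay_term
  let f : 𝓢(E, F) :=
    { toFun := fun y => ∑' i, g i y
      smooth' := contDiff_tsum (N := ⊤) smooth (fun l _ => hg 0 l) (fun l i x _ => bound l i x)
      decay' := fun k l => ⟨_, decay k l⟩ }
  exact ⟨f, hasSum_iteratedFDeriv⟩

theorem exists_pos_schwartzMap_hasSum_smul_iteratedFDeriv [Countable ι] (g : ι → 𝓢(E, F)) :
    ∃ r : ι → ℝ, (∀ i, 0 < r i) ∧ ∃ f : 𝓢(E, F), ∀ l x,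
      HasSum (fun i => r i • iteratedFDeriv ℝ l (g i) x) (iteratedFDeriv ℝ l f x) := by
  obtain ⟨r, hr_pos, hr_sum⟩ := exists_pos_forall_summable_mul
    fun (kl : ℕ × ℕ) i => SchwartzMap.seminorm ℝ kl.1 kl.2 (g i)
  have summable_seminorm (k l : ℕ) :
      Summable fun i => SchwartzMap.seminorm ℝ k l (r i • g i) := by
    simpa only [map_smul_eq_mul, Real.norm_of_nonneg (hr_pos _).le] using hr_sum (k, l)
  obtain ⟨f, hf⟩ := exists_schwartzMap_hasSum_iteratedFDeriv summable_seminorm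
  refine ⟨r, hr_pos, f, fun l x => ?_⟩
  have iteratedFDeriv_smul (i : ι) :
      iteratedFDeriv ℝ l (r i • g i) x = r i • iteratedFDeriv ℝ l (g i) x :=
    iteratedFDeriv_const_smul_apply ((g i).smooth l).contDiffAt
  simpa only [← iteratedFDeriv_smul] using hf l x

end Series

section FiniteDimensional

variable {E : Type*} [NormedAddCommGroup E] [NormedSpace ℝ E] [FiniteDimensional ℝ E]

theorem exists_schwartzMap_tsupport_subset_nonneg_pos {U : Set E} {x : E} (hU : U ∈ 𝓝 x) :
    ∃ f : 𝓢(E, ℝ), tsupport f ⊆ U ∧ (∀ y, 0 ≤ f y) ∧ 0 < f x := by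
  obtain ⟨f, f_tsupport, f_compact, f_smooth, f_range, f_x⟩ :=
    exists_contDiff_tsupport_subset (n := ⊤) hU
  exact ⟨f_compact.toSchwartzMap f_smooth, f_tsupport, fun y => (f_range (mem_range_self y)).1,
    zero_lt_one.trans_eq f_x.symm⟩

theorem exists_countable_schwartzMap_tsupport_subset_nonneg_pos {U : Set E} (hU : IsOpen U) :
    ∃ S : Set 𝓢(E, ℝ), S.Countable ∧ (∀ g ∈ S, tsupport g ⊆ U ∧ ∀ y, 0 ≤ g y) ∧
      ∀ x ∈ U, ∃ g ∈ S, 0 < g x := by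
  choose! bump bump_tsupport bump_nonneg bump_pos using fun x (hx : x ∈ U) =>
    exists_schwartzMap_tsupport_subset_nonneg_pos (hU.mem_nhds hx)
  have pos_mem_nhdsWithin (x : E) (hx : x ∈ U) : {y | 0 < bump x y} ∈ 𝓝[U] x :=
    mem_nhdsWithin_of_mem_nhds <|
      (isOpen_lt continuous_const (bump x).continuous).mem_nhds (bump_pos x hx)
  obtain ⟨t, t_subset, t_countable, t_cover⟩ :=
    TopologicalSpace.countable_cover_nhdsWithin pos_mem_nhdsWithin
  refine ⟨bump '' t, t_countable.image bump, ?_, fun x hx => ?_⟩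
  · exact forall_mem_image.2 fun x hx =>
      ⟨bump_tsupport x (t_subset hx), bump_nonneg x (t_subset hx)⟩
  · obtain ⟨y, hy, y_pos⟩ := mem_iUnion₂.1 (t_cover hx)
    exact ⟨bump y, mem_image_of_mem bump hy, y_pos⟩

theorem stmt_10_general {U : Set E} (hU : IsOpen U) :
    ∃ f : 𝓢(E, ℝ), (∀ z ∉ U, ∀ k : ℕ, iteratedFDeriv ℝ k f z = 0) ∧ ∀ x ∈ U, 0 < f x := by
  obtain ⟨S, S_countable, hS, S_pos⟩ :=
    exists_countable_schwartzMap_tsupport_subset_nonneg_pos hU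
  have : Countable S := S_countable.to_subtype
  obtain ⟨r, r_pos, f, hf⟩ :=
    exists_pos_schwartzMap_hasSum_smul_iteratedFDeriv ((↑) : S → 𝓢(E, ℝ))
  refine ⟨f, fun z hz k => ?_, fun x hx => ?_⟩
  · have flat (g : S) : iteratedFDeriv ℝ k (g : 𝓢(E, ℝ)) z = 0 :=
      Function.notMem_support.1 fun h => hz ((hS g g.2).1 (support_iteratedFDeriv_subset k h))
    simpa only [flat, smul_zero, tsum_zero] using (hf k z).tsum_eq.symm
  · have hasSum_apply : HasSum (fun g : S => r g * (g : 𝓢(E, ℝ)) x) (f x) := by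
      simpa using ContinuousMultilinearMap.hasSum_eval (hf 0 x) 0
    have term_nonneg (g : S) : 0 ≤ r g * (g : 𝓢(E, ℝ)) x :=
      mul_nonneg (r_pos g).le ((hS g g.2).2 x)
    obtain ⟨g, hg, g_pos⟩ := S_pos x hx
    rw [← hasSum_apply.tsum_eq]
    exact hasSum_apply.summable.tsum_pos term_nonneg ⟨g, hg⟩ (mul_pos (r_pos _) g_pos)

end FiniteDimensional

/-- For every open `U ⊆ ℝⁿ` there is a Schwartz function on `ℝⁿ`
which is flat at `ℝⁿ \ U` (all iterated derivatives vanish there) and strictly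
positive on `U`; i.e. `𝒮(U)` contains a strictly positive function. -/
theorem stmt_10 (n : ℕ) (U : Set (EuclideanSpace ℝ (Fin n))) (hU : IsOpen U) :
    ∃ f : SchwartzMap (EuclideanSpace ℝ (Fin n)) ℝ,
      (∀ z ∉ U, ∀ k : ℕ, iteratedFDeriv ℝ k (⇑f) z = 0) ∧ ∀ x ∈ U, 0 < f x :=
  stmt_10_general hU
end

section
/- Let n ≥ 1 and let U ⊆ ℝⁿ be a nonempty open bounded subset. Then the Hausdorff dimension of the boundary ∂U = closure(U) \ U of U is at least n − 1. -/
open scoped ENNReal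

/-!
Join an interior point of `s` to an exterior point and project along the direction of that segment.
Each parallel translate of the segment by a small vector still runs from the interior of `s` to its
exterior, hence crosses `frontier s`. So the projection of `frontier s` to a space of one dimension
less contains an open set, and projections, being Lipschitz, do not raise Hausdorff dimension.
A bounded set in a nontrivial normed space has an exterior point.
-/

open Module Set

theorem inter_frontier_nonempty_of_isPreconnected {X : Type*} [TopologicalSpace X] {s t : Set X}
    (ht : IsPreconnected t) (hts : (t ∩ s).Nonempty) (hts' : (t ∩ sᶜ).Nonempty) :
    (t ∩ frontier s).Nonempty := by
  by_contra hdisj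
  have hcover : t ⊆ interior s ∪ interior sᶜ := by
    rw [← compl_frontier_eq_union_interior]
    exact fun x hx hxs ↦ hdisj ⟨x, hx, hxs⟩
  have hint : (t ∩ interior s).Nonempty := hts.imp fun x hx ↦
    ⟨hx.1, (hcover hx.1).resolve_right fun h ↦ interior_subset h hx.2⟩
  have hext : (t ∩ interior sᶜ).Nonempty := hts'.imp fun x hx ↦
    ⟨hx.1, (hcover hx.1).resolve_left fun h ↦ hx.2 (interior_subset h)⟩
  obtain ⟨x, -, hx, hx'⟩ := ht _ _ isOpen_interior isOpen_interior hcover hint hext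
  exact interior_subset hx' (interior_subset hx)

section Projection

variable {E F : Type*} [AddCommGroup E] [Module ℝ E] [TopologicalSpace E] [IsTopologicalAddGroup E]
  [ContinuousSMul ℝ E] [AddCommGroup F] [Module ℝ F]

theorem image_inter_preimage_add_compl_subset_image_frontier (f : E →ₗ[ℝ] F) {v : E} (hv : f v = 0)
    (s : Set E) : f '' (s ∩ (· + v) ⁻¹' sᶜ) ⊆ f '' frontier s := by
  rintro _ ⟨x, ⟨hx, hxv⟩, rfl⟩
  obtain ⟨z, hz, hzs⟩ := inter_frontier_nonempty_of_isPreconnected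
    (convex_segment x (x + v)).isPreconnected ⟨x, left_mem_segment ℝ _ _, hx⟩
    ⟨x + v, right_mem_segment ℝ _ _, hxv⟩
  rw [segment_eq_image'] at hz
  obtain ⟨t, -, rfl⟩ := hz
  exact ⟨_, hzs, by simp [hv]⟩

theorem nonempty_interior_image_frontier [TopologicalSpace F] {f : E →ₗ[ℝ] F} (hf : IsOpenMap f)
    {s : Set E} {a b : E} (ha : a ∈ interior s) (hb : b ∈ interior sᶜ) (hab : f a = f b) :
    (interior (f '' frontier s)).Nonempty := by
  let V : Set E := interior s ∩ (· + (b - a)) ⁻¹' interior sᶜ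
  have hV : IsOpen V := isOpen_interior.inter (isOpen_interior.preimage (continuous_add_const _))
  have hVs : V ⊆ s ∩ (· + (b - a)) ⁻¹' sᶜ :=
    inter_subset_inter interior_subset (preimage_mono interior_subset)
  have hVf : f '' V ⊆ f '' frontier s := (image_mono hVs).trans
    (image_inter_preimage_add_compl_subset_image_frontier f (by simp [hab]) s)
  have haV : a ∈ V := ⟨ha, by simpa using hb⟩
  exact ⟨f a, interior_maximal hVf (hf V hV) (mem_image_of_mem f haV)⟩

end Projection

theorem finrank_le_finrank_quotient_span_singleton_add_one {K V : Type*} [DivisionRing K]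
    [AddCommGroup V] [Module K V] [FiniteDimensional K V] (v : V) :
    finrank K V ≤ finrank K (V ⧸ K ∙ v) + 1 := by
  rw [← (K ∙ v).finrank_quotient_add_finrank]
  gcongr
  simpa using finrank_span_le_card (R := K) {v}

theorem finrank_le_dimH_of_nonempty_interior_image {X F : Type*} [EMetricSpace X]
    [NormedAddCommGroup F] [NormedSpace ℝ F] [FiniteDimensional ℝ F] {K : NNReal} {f : X → F}
    (hf : LipschitzWith K f) {s : Set X} (hs : (interior (f '' s)).Nonempty) :
    (finrank ℝ F : ℝ≥0∞) ≤ dimH s :=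
  (Real.dimH_of_nonempty_interior hs).symm.trans_le (hf.dimH_image_le s)

theorem nonempty_interior_compl_of_isBounded (𝕜 : Type*) {E : Type*} [NontriviallyNormedField 𝕜]
    [NormedAddCommGroup E] [NormedSpace 𝕜 E] [Nontrivial E] {s : Set E}
    (hs : Bornology.IsBounded s) : (interior sᶜ).Nonempty := by
  rw [interior_compl, nonempty_compl]
  exact fun h ↦ NormedSpace.unbounded_univ 𝕜 E (h ▸ hs.closure)

theorem stmt_11_general {E : Type*} [NormedAddCommGroup E] [NormedSpace ℝ E]
    [FiniteDimensional ℝ E] {s : Set E} (hs : (interior s).Nonempty)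
    (hs' : (interior sᶜ).Nonempty) : (finrank ℝ E : ℝ≥0∞) - 1 ≤ dimH (frontier s) := by
  obtain ⟨a, ha⟩ := hs
  obtain ⟨b, hb⟩ := hs'
  let L : Submodule ℝ E := ℝ ∙ (b - a)
  have : IsClosed (L : Set E) := L.closed_of_finiteDimensional
  have hab : L.mkQ a = L.mkQ b :=
    .symm <| (Submodule.Quotient.eq L).2 <| Submodule.mem_span_singleton_self _
  have hint : (interior (L.mkQ '' frontier s)).Nonempty :=
    nonempty_interior_image_frontier L.isOpenMap_mkQ ha hb hab
  rw [tsub_le_iff_right]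
  calc (finrank ℝ E : ℝ≥0∞)
    _ ≤ finrank ℝ (E ⧸ L) + 1 :=
      mod_cast finrank_le_finrank_quotient_span_singleton_add_one (K := ℝ) (b - a)
    _ ≤ dimH (frontier s) + 1 := by
      gcongr
      exact finrank_le_dimH_of_nonempty_interior_image L.mkQL.lipschitz hint

/-- The boundary of a nonempty open bounded subset of `ℝⁿ` (`n ≥ 1`)
has Hausdorff dimension at least `n - 1`. -/
theorem stmt_11 (n : ℕ) (hn : 1 ≤ n) (U : Set (EuclideanSpace ℝ (Fin n)))
    (hU : IsOpen U) (hne : U.Nonempty) (hb : Bornology.IsBounded U) :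
    (n : ℝ≥0∞) - 1 ≤ dimH (frontier U) := by
  have : NeZero n := ⟨by omega⟩
  simpa using stmt_11_general (hU.interior_eq.symm ▸ hne)
    (nonempty_interior_compl_of_isBounded ℝ hb)
end

section
/- Let n ∈ ℕ and let A₀, A₁ ⊆ ℝⁿ be nonempty closed subsets. Then there exists a smooth function φ on the open set ℝⁿ \ (A₀ ∩ A₁) such that φ = 0 on A₀ \ (A₀ ∩ A₁), φ = 1 on A₁ \ (A₀ ∩ A₁), and for every k ∈ ℕ there exists a constant C_k > 0 such that ‖D^k φ(x)‖ ≤ C_k · d(x)^{−k} for every x ∈ ℝⁿ \ (A₀ ∩ A₁), where d(x) = max(dist(x, A₀), dist(x, A₁)) and D^k φ denotes the k-th iterated derivative of φ. -/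
/-!
Let `d = max (dist (·, A₀)) (dist (·, A₁))`, a `1`-Lipschitz function which is positive exactly off
`A₀ ∩ A₁`. Choose in `A₁ \ A₀` a maximal set `S` of points whose mutual distances are at least
`d / 8`, and add up over `z ∈ S` a fixed bump function rescaled to the ball of radius `d z / 7`
around `z`. As `d` hardly varies on these balls, a packing argument bounds the number of them
meeting near any given point `x` in terms of the dimension only, and each summand has `k`-th
derivative `O(d x ^ (-k))`. The sum is at least `1` on `A₁ \ A₀` by maximality of `S`, and vanishes
on `A₀` because `d z = dist (z, A₀)` for `z ∈ A₁`; composing it with a smooth step function gives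
`φ`.
-/

section

open Metric Set Filter Topology Function Module
open scoped ContDiff

section Separation

lemma exists_maximal_subset_pairwise {X : Type*} (A : Set X) (r : X → X → Prop) :
    ∃ S, Maximal (fun S : Set X ↦ S ⊆ A ∧ S.Pairwise r) S := by
  refine zorn_subset {S | S ⊆ A ∧ S.Pairwise r} fun c hc hchain ↦
    ⟨⋃₀ c, ⟨sUnion_subset fun s hs ↦ (hc hs).1, ?_⟩, fun _ ↦ subset_sUnion_of_mem⟩
  exact (pairwise_sUnion hchain.directedOn).2 fun s hs ↦ (hc hs).2

lemma exists_subset_pairwise_min_le_dist {X : Type*} [PseudoMetricSpace X] {A : Set X} {ρ : X → ℝ}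
    (hρ : ∀ a ∈ A, 0 < ρ a) :
    ∃ S ⊆ A, S.Pairwise (fun z w ↦ min (ρ z) (ρ w) ≤ dist z w) ∧ A ⊆ ⋃ z ∈ S, ball z (ρ z) := by
  obtain ⟨S, hS⟩ := exists_maximal_subset_pairwise A fun z w ↦ min (ρ z) (ρ w) ≤ dist z w
  refine ⟨S, hS.prop.1, hS.prop.2, fun a ha ↦ ?_⟩
  by_contra hcover
  have hfar : ∀ z ∈ S, ρ z ≤ dist a z := by simpa using hcover
  have hinsert : (insert a S).Pairwise fun z w ↦ min (ρ z) (ρ w) ≤ dist z w :=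
    hS.prop.2.insert fun z hz _ ↦
      ⟨(min_le_right _ _).trans (hfar z hz),
        (min_le_left _ _).trans ((hfar z hz).trans_eq (dist_comm a z))⟩
  have haS : a ∈ S :=
    hS.le_of_ge ⟨insert_subset ha hS.prop.1, hinsert⟩ (subset_insert a S) (mem_insert a S)
  exact (hρ a ha).not_ge ((hfar a haS).trans_eq (dist_self a))

lemma le_add_dist_of_lipschitzWith_one {X : Type*} [PseudoMetricSpace X] {d : X → ℝ}
    (hd : LipschitzWith 1 d) (x y : X) : d x ≤ d y + dist x y := by
  simpa using hd.le_add_mul x y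

lemma dist_le_div_five_of_mem_ball {X : Type*} [PseudoMetricSpace X] {d : X → ℝ}
    (hd : LipschitzWith 1 d) {x y z : X} (hx : y ∈ ball x (d x / 40)) (hz : y ∈ ball z (d z / 7)) :
    dist z x ≤ d x / 5 := by
  rw [mem_ball] at hx hz
  linarith [le_add_dist_of_lipschitzWith_one hd z x, dist_triangle_left z x y,
    dist_nonneg (x := y) (y := x)]

variable {E : Type*} [NormedAddCommGroup E] [NormedSpace ℝ E] [FiniteDimensional ℝ E]

lemma card_le_of_pairwise_le_dist {r : ℝ} (hr : 0 < r) {x : E} {T : Finset E}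
    (hT : ∀ z ∈ T, dist z x ≤ 2 * r) (hsep : (T : Set E).Pairwise fun z w ↦ r ≤ dist z w) :
    T.card ≤ 5 ^ finrank ℝ E := by
  classical
  let rescale : E → E := fun z ↦ r⁻¹ • (z - x)
  have hinj : Injective rescale :=
    (smul_right_injective E (inv_ne_zero hr.ne')).comp sub_left_injective
  rw [← Finset.card_image_of_injective T hinj]
  refine Besicovitch.card_le_of_separated _ ?_ ?_
  · simp only [Finset.forall_mem_image]
    intro z hz
    rw [norm_smul, ← dist_eq_norm, Real.norm_of_nonneg (inv_nonneg.2 hr.le), inv_mul_le_iff₀ hr,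
      mul_comm]
    exact hT z hz
  · simp only [Finset.forall_mem_image]
    intro z hz w hw hne
    rw [← smul_sub, sub_sub_sub_cancel_right, norm_smul, ← dist_eq_norm,
      Real.norm_of_nonneg (inv_nonneg.2 hr.le), le_inv_mul_iff₀ hr, mul_one]
    exact hsep hz hw (ne_of_apply_ne rescale hne)

lemma encard_le_of_pairwise_le_dist {r : ℝ} (hr : 0 < r) {x : E} {T : Set E}
    (hT : T ⊆ closedBall x (2 * r)) (hsep : T.Pairwise fun z w ↦ r ≤ dist z w) :
    T.encard ≤ (5 ^ finrank ℝ E : ℕ) := by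
  by_contra! hlt
  obtain ⟨U, hUT, hU⟩ := exists_subset_encard_eq (Order.add_one_le_of_lt hlt)
  have hfin : U.Finite := finite_of_encard_eq_coe (k := 5 ^ finrank ℝ E + 1) (by exact_mod_cast hU)
  lift U to Finset E using hfin
  have hcard := card_le_of_pairwise_le_dist hr (fun z hz ↦ hT (hUT hz)) (hsep.mono hUT)
  rw [encard_coe_eq_coe_finsetCard] at hU
  have : U.card = 5 ^ finrank ℝ E + 1 := by exact_mod_cast hU
  omega

end Separation

section SmoothAtScale

variable {E F G : Type*} [NormedAddCommGroup E] [NormedSpace ℝ E]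
  [NormedAddCommGroup F] [NormedSpace ℝ F] [NormedAddCommGroup G] [NormedSpace ℝ G]

/-- `f` is smooth at scale `d` if it is smooth at all points `x` with `0 < d x` and its derivatives
of every order `k` are `O(d x ^ (-k))` there. Nothing is required at the other points. -/
structure SmoothAtScale (d : E → ℝ) (f : E → F) : Prop where
  contDiffAt : ∀ ⦃x⦄, 0 < d x → ContDiffAt ℝ ∞ f x
  exists_bound : ∀ k : ℕ, ∃ C : ℝ, ∀ ⦃x⦄, 0 < d x → ‖iteratedFDeriv ℝ k f x‖ ≤ C / d x ^ k

lemma exists_one_le_forall_le (C : ℕ → ℝ) (k : ℕ) : ∃ M, 1 ≤ M ∧ ∀ i ≤ k, C i ≤ M := by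
  obtain ⟨M, hM⟩ := ((finite_Iic k).image C).bddAbove
  exact ⟨max 1 M, le_max_left _ _, fun i hi ↦ le_max_of_le_right (hM ⟨i, hi, rfl⟩)⟩

lemma exists_norm_iteratedFDeriv_le_of_isCompact {g : F → G} (hg : ContDiff ℝ ∞ g)
    {s : Set F} (hs : IsCompact s) (k : ℕ) :
    ∃ B, ∀ i ≤ k, ∀ y ∈ s, ‖iteratedFDeriv ℝ i g y‖ ≤ B := by
  have hbound (i : ℕ) : ∃ B, ∀ y ∈ s, ‖iteratedFDeriv ℝ i g y‖ ≤ B :=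
    hs.exists_bound_of_continuousOn
      (hg.continuous_iteratedFDeriv (mod_cast le_top)).continuousOn
  choose B hB using hbound
  obtain ⟨M, -, hM⟩ := exists_one_le_forall_le B k
  exact ⟨M, fun i hi y hy ↦ (hB i y hy).trans (hM i hi)⟩

lemma SmoothAtScale.exists_norm_le {d : E → ℝ} {f : E → F} (hf : SmoothAtScale d f) :
    ∃ R, ∀ x, 0 < d x → ‖f x‖ ≤ R := by
  obtain ⟨R, hR⟩ := hf.exists_bound 0
  exact ⟨R, fun x hx ↦ by simpa using hR hx⟩

lemma SmoothAtScale.exists_pos_norm_iteratedFDeriv_le {d : E → ℝ} {f : E → F}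
    (hf : SmoothAtScale d f) (k : ℕ) :
    ∃ C, 0 < C ∧ ∀ x, 0 < d x → ‖iteratedFDeriv ℝ k f x‖ ≤ C * d x ^ (-(k : ℤ)) := by
  obtain ⟨C, hC⟩ := hf.exists_bound k
  refine ⟨max C 1, by positivity, fun x hx ↦ (hC hx).trans ?_⟩
  rw [zpow_neg, zpow_natCast, div_eq_mul_inv]
  gcongr
  exact le_max_left C 1

lemma SmoothAtScale.comp [ProperSpace F] {d : E → ℝ} (hd : Continuous d) {f : E → F}
    (hf : SmoothAtScale d f) {g : F → G} (hg : ContDiff ℝ ∞ g) : SmoothAtScale d (g ∘ f) where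
  contDiffAt x hx := hg.contDiffAt.comp x (hf.contDiffAt hx)
  exists_bound k := by
    have hU : IsOpen {x | 0 < d x} := isOpen_lt continuous_const hd
    obtain ⟨R, hR⟩ := hf.exists_norm_le
    obtain ⟨B, hB⟩ := exists_norm_iteratedFDeriv_le_of_isCompact hg (isCompact_closedBall 0 R) k
    choose C hC using hf.exists_bound
    obtain ⟨M, hM1, hM⟩ := exists_one_le_forall_le C k
    refine ⟨k.factorial * B * M ^ k, fun x hx ↦ ?_⟩
    have hfbound : ∀ i, 1 ≤ i → i ≤ k →
        ‖iteratedFDerivWithin ℝ i f {x | 0 < d x} x‖ ≤ (M / d x) ^ i := fun i hi hik ↦ by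
      have hCM : C i ≤ M ^ i := (hM i hik).trans (le_self_pow₀ hM1 (by omega))
      rw [iteratedFDerivWithin_of_isOpen i hU hx, div_pow]
      exact (hC i hx).trans (by gcongr)
    have hgbound : ∀ i ≤ k, ‖iteratedFDerivWithin ℝ i g univ (f x)‖ ≤ B := fun i hi ↦ by
      rw [iteratedFDerivWithin_univ]
      exact hB i hi _ (mem_closedBall_zero_iff.2 (hR x hx))
    rw [← iteratedFDerivWithin_of_isOpen k hU hx, mul_div_assoc, ← div_pow]
    exact norm_iteratedFDerivWithin_comp_le hg.contDiffOn
      (fun y hy ↦ (hf.contDiffAt hy).contDiffWithinAt) (mod_cast le_top) uniqueDiffOn_univ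
      hU.uniqueDiffOn (mapsTo_univ _ _) hx hgbound hfbound

lemma eventuallyEq_finsum_sum {ι X M : Type*} [AddCommMonoid M] {l : Filter X} {f : ι → X → M}
    {T : Finset ι} (hT : ∀ᶠ y in l, support (f · y) ⊆ T) :
    (fun y ↦ ∑ᶠ i, f i y) =ᶠ[l] fun y ↦ ∑ i ∈ T, f i y :=
  hT.mono fun _ ↦ finsum_eq_sum_of_support_subset _

lemma SmoothAtScale.finsum {ι : Type*} {d : E → ℝ} {f : ι → E → F} {K : ℕ}
    (hf : ∀ i x, 0 < d x → ContDiffAt ℝ ∞ (f i) x)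
    (hbound : ∀ k : ℕ, ∃ C : ℝ, ∀ i x, 0 < d x → ‖iteratedFDeriv ℝ k (f i) x‖ ≤ C / d x ^ k)
    (hoverlap : ∀ x, 0 < d x → ∃ T : Finset ι, T.card ≤ K ∧ ∀ᶠ y in 𝓝 x, support (f · y) ⊆ T) :
    SmoothAtScale d fun x ↦ ∑ᶠ i, f i x where
  contDiffAt x hx := by
    obtain ⟨T, -, hT⟩ := hoverlap x hx
    exact (ContDiffAt.sum fun i _ ↦ hf i x hx).congr_of_eventuallyEq (eventuallyEq_finsum_sum hT)
  exists_bound k := by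
    obtain ⟨C, hC⟩ := hbound k
    refine ⟨K * |C|, fun x hx ↦ ?_⟩
    obtain ⟨T, hTK, hT⟩ := hoverlap x hx
    calc ‖iteratedFDeriv ℝ k (fun x ↦ ∑ᶠ i, f i x) x‖
        = ‖∑ i ∈ T, iteratedFDeriv ℝ k (f i) x‖ := by
          rw [((eventuallyEq_finsum_sum hT).iteratedFDeriv (𝕜 := ℝ) k).eq_of_nhds,
            iteratedFDeriv_fun_sum_apply fun i _ ↦ (hf i x hx).of_le (mod_cast le_top)]
      _ ≤ T.card • (|C| / d x ^ k) := by
          rw [← Finset.sum_const]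
          refine norm_sum_le_of_le T fun i _ ↦ (hC i x hx).trans ?_
          gcongr
          exact le_abs_self C
      _ ≤ K * |C| / d x ^ k := by
          rw [nsmul_eq_mul, mul_div_assoc]
          gcongr

end SmoothAtScale

section RescaledBump

variable {E : Type*} [NormedAddCommGroup E] [NormedSpace ℝ E]

lemma iteratedFDeriv_comp_smul_sub {F : Type*} [NormedAddCommGroup F] [NormedSpace ℝ F] {f : E → F}
    {k : ℕ} (hf : ContDiff ℝ k f) (c : ℝ) (z x : E) :
    iteratedFDeriv ℝ k (fun x ↦ f (c • (x - z))) x =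
      c ^ k • iteratedFDeriv ℝ k f (c • (x - z)) := by
  rw [iteratedFDeriv_comp_sub (f := fun y ↦ f (c • y)), iteratedFDeriv_comp_const_smul c hf]

lemma dist_inv_smul_sub_zero {r : ℝ} (hr : 0 < r) (z x : E) :
    dist (r⁻¹ • (x - z)) 0 = dist x z / r := by
  rw [dist_zero_right, norm_smul, Real.norm_of_nonneg (inv_nonneg.2 hr.le), ← dist_eq_norm,
    inv_mul_eq_div]

variable [FiniteDimensional ℝ E]

variable (E) in
/-- The bump function all cutoffs are built from. The radii are chosen such that, with `d / 8` as
the separation of the centres, the packing bound `encard_le_of_pairwise_le_dist` applies. -/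
noncomputable def unitBump : ContDiffBump (0 : E) := ⟨1 / 8, 1 / 7, by norm_num, by norm_num⟩

/-- The translate to `z` of the bump function `unitBump`, dilated by the factor `r`: for `0 < r` it
equals `1` at distance at most `r / 8` from `z` and is supported in the ball of radius `r / 7`. -/
noncomputable def rescaledBump (r : ℝ) (z x : E) : ℝ := unitBump E (r⁻¹ • (x - z))

lemma contDiff_rescaledBump (r : ℝ) (z : E) : ContDiff ℝ ∞ (rescaledBump r z) :=
  (unitBump E).contDiff.comp ((contDiff_id.sub contDiff_const).const_smul _)

lemma rescaledBump_nonneg (r : ℝ) (z x : E) : 0 ≤ rescaledBump r z x := (unitBump E).nonneg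

lemma rescaledBump_eq_one {r : ℝ} (hr : 0 < r) {z x : E} (hx : dist x z ≤ r / 8) :
    rescaledBump r z x = 1 := by
  refine (unitBump E).one_of_mem_closedBall ?_
  rw [mem_closedBall, dist_inv_smul_sub_zero hr, div_le_iff₀ hr]
  exact hx.trans_eq (one_div_mul_eq_div 8 r).symm

lemma support_rescaledBump {r : ℝ} (hr : 0 < r) (z : E) :
    support (rescaledBump r z) = ball z (r / 7) := by
  ext x
  change r⁻¹ • (x - z) ∈ support (unitBump E) ↔ _
  rw [(unitBump E).support_eq, mem_ball, mem_ball, dist_inv_smul_sub_zero hr, div_lt_iff₀ hr,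
    ← one_div_mul_eq_div 7 r]
  rfl

lemma exists_norm_iteratedFDeriv_rescaledBump_le (k : ℕ) :
    ∃ C, ∀ r, 0 < r → ∀ z x : E, ‖iteratedFDeriv ℝ k (rescaledBump r z) x‖ ≤ C / r ^ k := by
  obtain ⟨C, hC⟩ := ((unitBump E).contDiff.continuous_iteratedFDeriv
    le_rfl).bounded_above_of_compact_support ((unitBump E).hasCompactSupport.iteratedFDeriv k)
  refine ⟨C, fun r hr z x ↦ ?_⟩
  unfold rescaledBump
  rw [iteratedFDeriv_comp_smul_sub (unitBump E).contDiff, norm_smul, norm_pow, norm_inv,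
    Real.norm_of_nonneg hr.le, inv_pow, inv_mul_eq_div]
  gcongr
  exact hC _

end RescaledBump

section Cutoff

variable {E : Type*} [NormedAddCommGroup E] [NormedSpace ℝ E] [FiniteDimensional ℝ E] {d : E → ℝ}

lemma exists_norm_iteratedFDeriv_rescaledBump_le_div_pow (hd : LipschitzWith 1 d) (k : ℕ) :
    ∃ C, ∀ z x, 0 < d z → 0 < d x →
      ‖iteratedFDeriv ℝ k (rescaledBump (d z) z) x‖ ≤ C / d x ^ k := by
  obtain ⟨C, hC⟩ := exists_norm_iteratedFDeriv_rescaledBump_le (E := E) k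
  have hC0 : 0 ≤ C := by simpa using (norm_nonneg _).trans (hC 1 one_pos 0 0)
  refine ⟨C * 2 ^ k, fun z x hz hx ↦ ?_⟩
  by_cases hzx : x ∈ closedBall z (d z / 7)
  · have hle : d x ≤ 2 * d z := by
      linarith [le_add_dist_of_lipschitzWith_one hd x z, mem_closedBall.1 hzx]
    refine (hC (d z) hz z x).trans ?_
    rw [div_le_div_iff₀ (by positivity) (by positivity), mul_assoc, ← mul_pow]
    gcongr
  · have hsupp : support (iteratedFDeriv ℝ k (rescaledBump (d z) z)) ⊆ closedBall z (d z / 7) := by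
      refine (support_iteratedFDeriv_subset k).trans ?_
      rw [tsupport, support_rescaledBump hz]
      exact closure_ball_subset_closedBall
    rw [notMem_support.1 (notMem_subset hsupp hzx), norm_zero]
    positivity

lemma encard_setOf_dist_le_div_five (hd : LipschitzWith 1 d) {S : Set E}
    (hsep : S.Pairwise fun z w ↦ min (d z / 8) (d w / 8) ≤ dist z w) {x : E} (hx : 0 < d x) :
    {z ∈ S | dist z x ≤ d x / 5}.encard ≤ (5 ^ finrank ℝ E : ℕ) := by
  have hscale : ∀ z, dist z x ≤ d x / 5 → d x / 10 ≤ d z / 8 := fun z hz ↦ by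
    linarith [le_add_dist_of_lipschitzWith_one hd x z, dist_comm x z]
  refine encard_le_of_pairwise_le_dist (r := d x / 10) (x := x) (by positivity) ?_ ?_
  · exact fun z hz ↦ mem_closedBall.2 (hz.2.trans_eq (by ring))
  · exact fun z hz w hw hne ↦
      (le_min (hscale z hz.2) (hscale w hw.2)).trans (hsep hz.1 hw.1 hne)

lemma exists_finset_card_le_eventually_support_subset (hd : LipschitzWith 1 d) {S : Set E}
    (hpos : ∀ z ∈ S, 0 < d z) (hsep : S.Pairwise fun z w ↦ min (d z / 8) (d w / 8) ≤ dist z w)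
    {x : E} (hx : 0 < d x) :
    ∃ T : Finset S, T.card ≤ 5 ^ finrank ℝ E ∧
      ∀ᶠ y in 𝓝 x, support (fun z : S ↦ rescaledBump (d z) (z : E) y) ⊆ T := by
  have hcard : {z : S | dist (z : E) x ≤ d x / 5}.encard ≤ (5 ^ finrank ℝ E : ℕ) := by
    rw [← Subtype.val_injective.encard_image]
    refine (encard_le_encard ?_).trans (encard_setOf_dist_le_div_five hd hsep hx)
    rintro _ ⟨z, hz, rfl⟩
    exact ⟨z.2, hz⟩
  have hfin := finite_of_encard_le_coe hcard
  refine ⟨hfin.toFinset, ?_, ?_⟩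
  · rw [hfin.encard_eq_coe_toFinset_card] at hcard
    exact_mod_cast hcard
  · filter_upwards [ball_mem_nhds x (show 0 < d x / 40 by positivity)] with y hy z hz
    have hyz : y ∈ ball (z : E) (d z / 7) := by rwa [← support_rescaledBump (hpos z z.2)]
    simpa using dist_le_div_five_of_mem_ball hd hy hyz

lemma smoothAtScale_finsum_rescaledBump (hd : LipschitzWith 1 d) {S : Set E}
    (hpos : ∀ z ∈ S, 0 < d z) (hsep : S.Pairwise fun z w ↦ min (d z / 8) (d w / 8) ≤ dist z w) :
    SmoothAtScale d fun x ↦ ∑ᶠ z : S, rescaledBump (d z) (z : E) x := by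
  refine SmoothAtScale.finsum (fun z x _ ↦ (contDiff_rescaledBump _ _).contDiffAt) (fun k ↦ ?_)
    fun x hx ↦ exists_finset_card_le_eventually_support_subset hd hpos hsep hx
  obtain ⟨C, hC⟩ := exists_norm_iteratedFDeriv_rescaledBump_le_div_pow hd k
  exact ⟨C, fun z x hx ↦ hC z x (hpos z z.2) hx⟩

lemma one_le_finsum_rescaledBump (hd : LipschitzWith 1 d) {S : Set E}
    (hpos : ∀ z ∈ S, 0 < d z) (hsep : S.Pairwise fun z w ↦ min (d z / 8) (d w / 8) ≤ dist z w)
    {x : E} (hx : 0 < d x) (hcover : x ∈ ⋃ z ∈ S, ball z (d z / 8)) :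
    1 ≤ ∑ᶠ z : S, rescaledBump (d z) (z : E) x := by
  obtain ⟨z, hz, hxz⟩ := mem_iUnion₂.1 hcover
  obtain ⟨T, -, hT⟩ := exists_finset_card_le_eventually_support_subset hd hpos hsep hx
  rw [← rescaledBump_eq_one (hpos z hz) (mem_ball.1 hxz).le]
  exact single_le_finsum (⟨z, hz⟩ : S) (T.finite_toSet.subset hT.self_of_nhds)
    fun w ↦ rescaledBump_nonneg _ _ _

theorem exists_smoothAtScale_cutoff (hd : LipschitzWith 1 d) (A : Set E) :
    ∃ φ : E → ℝ, SmoothAtScale d φ ∧ (∀ x ∈ A, 0 < d x → φ x = 1) ∧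
      ∀ x, (∀ z ∈ A, d z ≤ dist x z) → φ x = 0 := by
  obtain ⟨S, hSA, hsep, hcover⟩ :=
    exists_subset_pairwise_min_le_dist (A := {z ∈ A | 0 < d z}) (ρ := fun z ↦ d z / 8)
      fun z hz ↦ div_pos hz.2 (by norm_num)
  have hpos : ∀ z ∈ S, 0 < d z := fun z hz ↦ (hSA hz).2
  refine ⟨Real.smoothTransition ∘ fun x ↦ ∑ᶠ z : S, rescaledBump (d z) (z : E) x,
    (smoothAtScale_finsum_rescaledBump hd hpos hsep).comp hd.continuous
      Real.smoothTransition.contDiff, fun x hxA hx ↦ ?_, fun x hx ↦ ?_⟩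
  · exact Real.smoothTransition.one_of_one_le
      (one_le_finsum_rescaledBump hd hpos hsep hx (hcover ⟨hxA, hx⟩))
  · have hzero : ∀ z : S, rescaledBump (d z) (z : E) x = 0 := fun z ↦ by
      rw [← notMem_support, support_rescaledBump (hpos z z.2), mem_ball, not_lt]
      linarith [hx z (hSA z.2).1, hpos z z.2]
    simp [hzero]

end Cutoff

lemma max_infDist_pos_iff {X : Type*} [PseudoMetricSpace X] {A₀ A₁ : Set X} (h₀ : IsClosed A₀)
    (h₁ : IsClosed A₁) (hne₀ : A₀.Nonempty) (hne₁ : A₁.Nonempty) {x : X} :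
    0 < max (infDist x A₀) (infDist x A₁) ↔ x ∈ (A₀ ∩ A₁)ᶜ := by
  rw [lt_max_iff, ← h₀.notMem_iff_infDist_pos hne₀, ← h₁.notMem_iff_infDist_pos hne₁,
    mem_compl_iff, mem_inter_iff, not_and_or]

theorem stmt_13_general {E : Type*} [NormedAddCommGroup E] [NormedSpace ℝ E]
    [FiniteDimensional ℝ E] {A₀ A₁ : Set E} (h₀ : IsClosed A₀) (h₁ : IsClosed A₁)
    (hne₀ : A₀.Nonempty) (hne₁ : A₁.Nonempty) :
    ∃ φ : E → ℝ,
      ContDiffOn ℝ ∞ φ (A₀ ∩ A₁)ᶜ ∧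
      (∀ x ∈ A₀ \ (A₀ ∩ A₁), φ x = 0) ∧
      (∀ x ∈ A₁ \ (A₀ ∩ A₁), φ x = 1) ∧
      ∀ k : ℕ, ∃ C : ℝ, 0 < C ∧ ∀ x ∈ (A₀ ∩ A₁)ᶜ,
        ‖iteratedFDerivWithin ℝ k φ (A₀ ∩ A₁)ᶜ x‖ ≤
          C * (max (infDist x A₀) (infDist x A₁)) ^ (-(k : ℤ)) := by
  have hd : LipschitzWith 1 fun x ↦ max (infDist x A₀) (infDist x A₁) := by
    simpa using (lipschitz_infDist_pt A₀).max (lipschitz_infDist_pt A₁)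
  have hpos {x : E} := max_infDist_pos_iff h₀ h₁ hne₀ hne₁ (x := x)
  obtain ⟨φ, hφ, hone, hzero⟩ := exists_smoothAtScale_cutoff hd A₁
  refine ⟨φ, fun x hx ↦ (hφ.contDiffAt (hpos.2 hx)).contDiffWithinAt, fun x hx ↦ ?_,
    fun x hx ↦ hone x hx.1 (hpos.2 hx.2), fun k ↦ ?_⟩
  · refine hzero x fun z hz ↦ ?_
    rw [infDist_zero_of_mem hz, max_eq_left infDist_nonneg, dist_comm]
    exact infDist_le_dist_of_mem hx.1
  · obtain ⟨C, hC0, hC⟩ := hφ.exists_pos_norm_iteratedFDeriv_le k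
    refine ⟨C, hC0, fun x hx ↦ ?_⟩
    rw [iteratedFDerivWithin_of_isOpen k (h₀.inter h₁).isOpen_compl hx]
    exact hC x (hpos.2 hx)

end

/-- **Hörmander's lemma.** For nonempty closed `A₀, A₁ ⊆ ℝⁿ` there is a
smooth function `φ` on `Ω = ℝⁿ \ (A₀ ∩ A₁)` with `φ = 0` on `A₀ \ (A₀ ∩ A₁)`,
`φ = 1` on `A₁ \ (A₀ ∩ A₁)`, and whose `k`-th iterated derivative is bounded by
`C_k · d(x)^{-k}` where `d(x) = max(dist(x, A₀), dist(x, A₁))`. -/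
theorem stmt_13 (n : ℕ) (A₀ A₁ : Set (EuclideanSpace ℝ (Fin n)))
    (h₀ : IsClosed A₀) (h₁ : IsClosed A₁) (hne₀ : A₀.Nonempty) (hne₁ : A₁.Nonempty) :
    ∃ φ : EuclideanSpace ℝ (Fin n) → ℝ,
      ContDiffOn ℝ (⊤ : ℕ∞) φ (A₀ ∩ A₁)ᶜ ∧
      (∀ x ∈ A₀ \ (A₀ ∩ A₁), φ x = 0) ∧
      (∀ x ∈ A₁ \ (A₀ ∩ A₁), φ x = 1) ∧
      ∀ k : ℕ, ∃ C : ℝ, 0 < C ∧ ∀ x ∈ (A₀ ∩ A₁)ᶜ,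
        ‖iteratedFDerivWithin ℝ k φ (A₀ ∩ A₁)ᶜ x‖ ≤
          C * (max (Metric.infDist x A₀) (Metric.infDist x A₁)) ^ (-(k : ℤ)) := by
  exact stmt_13_general h₀ h₁ hne₀ hne₁
end

section
/- Define f : ℝ → ℝ by f(0) = 0 and f(x) = sin(e^{1/x²})·e^{−1/x²} for x ≠ 0. Then: (a) for every m ∈ ℕ there exists C > 0 such that |f(x)| ≤ C·|x|^m for all x ∈ ℝ with |x| ≤ 1; (b) f is smooth on ℝ \ {0}, but f is not continuously differentiable on ℝ: for every δ > 0 the derivative f' is unbounded on (0, δ). -/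
/-!
Where the phase `exp (1 / x²)` is a multiple of `2π`, the sine vanishes and the cosine is `1`, so
differentiating the phase produces a factor `exp (1 / x²)` that exactly cancels the flat amplitude
`exp (-1 / x²)`. The derivative there equals `(1 / x²)' = -2 / x³`, and such points accumulate at
`0` from the right.
-/

open Filter Topology
open scoped Nat

theorem exp_neg_le_factorial_div_pow {t : ℝ} (ht : 0 < t) (m : ℕ) :
    Real.exp (-t) ≤ m ! / t ^ m := by
  rw [Real.exp_neg, ← inv_div]
  exact inv_anti₀ (by positivity) (Real.pow_div_factorial_le_exp t ht.le m)

theorem hasDerivAt_sin_exp_mul_exp_neg {θ : ℝ → ℝ} {θ' x : ℝ} (hθ : HasDerivAt θ θ' x) :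
    HasDerivAt (fun y => Real.sin (Real.exp (θ y)) * Real.exp (-θ y))
      (θ' * (Real.cos (Real.exp (θ x)) - Real.sin (Real.exp (θ x)) * Real.exp (-θ x))) x := by
  have cancel : Real.exp (θ x) * Real.exp (-θ x) = 1 := by
    rw [← Real.exp_add, add_neg_cancel, Real.exp_zero]
  refine (hθ.exp.sin.mul hθ.neg.exp).congr_deriv ?_
  linear_combination θ' * Real.cos (Real.exp (θ x)) * cancel

theorem exists_mem_Ioo_lt_of_tendsto_atTop {ι α β : Type*} [LinearOrder α] [TopologicalSpace α]
    [ClosedIciTopology α] [Preorder β] [NoMaxOrder β] {l : Filter ι} [l.NeBot] {u : ι → α}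
    {g : α → β} {a b : α} (hu : Tendsto u l (𝓝[>] a)) (hg : Tendsto (fun i => g (u i)) l atTop)
    (hab : a < b) (c : β) : ∃ x ∈ Set.Ioo a b, c < g x := by
  obtain ⟨i, hi, hc⟩ :=
    ((hu.eventually (Ioo_mem_nhdsGT hab)).and (hg.eventually_gt_atTop c)).exists
  exact ⟨u i, hi, hc⟩

theorem not_contDiff_one_of_tendsto_norm_deriv_atTop {ι 𝕜 F : Type*} [NontriviallyNormedField 𝕜]
    [NormedAddCommGroup F] [NormedSpace 𝕜 F] {l : Filter ι} [l.NeBot] {u : ι → 𝕜} {f : 𝕜 → F}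
    {a : 𝕜} (hu : Tendsto u l (𝓝 a)) (hf : Tendsto (fun i => ‖deriv f (u i)‖) l atTop) :
    ¬ ContDiff 𝕜 1 f := fun hC =>
  not_tendsto_nhds_of_tendsto_atTop hf _ <|
    (((hC.continuous_deriv le_rfl).tendsto a).comp hu).norm

/-- The function `sin (exp (1 / x²)) * exp (-1 / x²)`, which oscillates ever faster near `0` with
an amplitude vanishing there to infinite order. The value at `0` has to be prescribed, since
`1 / 0 = 0` would make the formula return `sin 1`. -/
noncomputable def flatOscillation (x : ℝ) : ℝ :=
  if x = 0 then 0 else Real.sin (Real.exp (1 / x ^ 2)) * Real.exp (-1 / x ^ 2)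

theorem flatOscillation_zero : flatOscillation 0 = 0 := if_pos rfl

theorem flatOscillation_of_ne_zero {x : ℝ} (hx : x ≠ 0) :
    flatOscillation x = Real.sin (Real.exp (1 / x ^ 2)) * Real.exp (-(1 / x ^ 2)) := by
  rw [flatOscillation, if_neg hx, neg_div]

theorem abs_flatOscillation_le (m : ℕ) (x : ℝ) : |flatOscillation x| ≤ m ! * |x| ^ (2 * m) := by
  rcases eq_or_ne x 0 with rfl | hx
  · rw [flatOscillation_zero, abs_zero]
    positivity
  · calc |flatOscillation x|
        = |Real.sin (Real.exp (1 / x ^ 2))| * Real.exp (-(1 / x ^ 2)) := by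
          rw [flatOscillation_of_ne_zero hx, abs_mul, Real.abs_exp]
      _ ≤ Real.exp (-(1 / x ^ 2)) :=
          mul_le_of_le_one_left (Real.exp_pos _).le (Real.abs_sin_le_one _)
      _ ≤ m ! / (1 / x ^ 2) ^ m := exp_neg_le_factorial_div_pow (by positivity) m
      _ = m ! * |x| ^ (2 * m) := by
          rw [one_div, inv_pow, div_inv_eq_mul, pow_mul, sq_abs]

theorem contDiffOn_flatOscillation {n : WithTop ℕ∞} : ContDiffOn ℝ n flatOscillation {0}ᶜ := by
  have phase : ContDiffOn ℝ n (fun x : ℝ => 1 / x ^ 2) {0}ᶜ :=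
    contDiffOn_const.div (contDiff_id.pow 2).contDiffOn fun _ hx => pow_ne_zero 2 hx
  exact (phase.exp.sin.mul phase.neg.exp).congr fun _ hx => flatOscillation_of_ne_zero hx

theorem deriv_flatOscillation {x : ℝ} (hx : x ≠ 0) :
    deriv flatOscillation x = -2 / x ^ 3 * (Real.cos (Real.exp (1 / x ^ 2)) -
      Real.sin (Real.exp (1 / x ^ 2)) * Real.exp (-(1 / x ^ 2))) := by
  have phase : HasDerivAt (fun y : ℝ => 1 / y ^ 2) (-2 / x ^ 3) x := by
    simp only [one_div]
    refine ((hasDerivAt_pow 2 x).fun_inv (pow_ne_zero 2 hx)).congr_deriv ?_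
    field_simp
    ring
  refine ((hasDerivAt_sin_exp_mul_exp_neg phase).congr_of_eventuallyEq ?_).deriv
  filter_upwards [isOpen_ne.mem_nhds hx] with y hy using flatOscillation_of_ne_zero hy

/-- The `k`-th point of `(0, ∞)` at which the phase `exp (1 / x²)` of `flatOscillation` completes
a full turn, i.e. equals `2πk`. Only meaningful for `k ≠ 0`; the value at `k = 0` is `0`. -/
noncomputable def fullTurnPoint (k : ℕ) : ℝ := (√(Real.log (k * (2 * Real.pi))))⁻¹

theorem log_nat_mul_two_pi_pos {k : ℕ} (hk : k ≠ 0) : 0 < Real.log (k * (2 * Real.pi)) := by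
  have one_le : (1 : ℝ) ≤ k := Nat.one_le_cast.2 (Nat.one_le_iff_ne_zero.2 hk)
  exact Real.log_pos (by nlinarith [Real.pi_gt_three])

theorem fullTurnPoint_pos {k : ℕ} (hk : k ≠ 0) : 0 < fullTurnPoint k :=
  inv_pos.2 (Real.sqrt_pos.2 (log_nat_mul_two_pi_pos hk))

theorem exp_one_div_fullTurnPoint_sq {k : ℕ} (hk : k ≠ 0) :
    Real.exp (1 / fullTurnPoint k ^ 2) = k * (2 * Real.pi) := by
  rw [fullTurnPoint, inv_pow, one_div, inv_inv, Real.sq_sqrt (log_nat_mul_two_pi_pos hk).le,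
    Real.exp_log (by positivity)]

theorem tendsto_fullTurnPoint : Tendsto fullTurnPoint atTop (𝓝[>] 0) :=
  tendsto_inv_atTop_nhdsGT_zero.comp <| Real.tendsto_sqrt_atTop.comp <|
    Real.tendsto_log_atTop.comp <|
      tendsto_natCast_atTop_atTop.atTop_mul_const Real.two_pi_pos

theorem deriv_flatOscillation_fullTurnPoint {k : ℕ} (hk : k ≠ 0) :
    deriv flatOscillation (fullTurnPoint k) = -2 / fullTurnPoint k ^ 3 := by
  have sin_eq_zero : Real.sin (k * (2 * Real.pi)) = 0 := by
    simpa using Real.sin_add_nat_mul_two_pi 0 k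
  rw [deriv_flatOscillation (fullTurnPoint_pos hk).ne', exp_one_div_fullTurnPoint_sq hk,
    Real.cos_nat_mul_two_pi, sin_eq_zero, zero_mul, sub_zero, mul_one]

theorem tendsto_abs_deriv_flatOscillation_fullTurnPoint :
    Tendsto (fun k => |deriv flatOscillation (fullTurnPoint k)|) atTop atTop := by
  have cube : Tendsto (fun k => (fullTurnPoint k)⁻¹ ^ 3) atTop atTop :=
    (tendsto_pow_atTop three_ne_zero).comp (tendsto_inv_nhdsGT_zero.comp tendsto_fullTurnPoint)
  refine (cube.const_mul_atTop two_pos).congr' ?_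
  filter_upwards [eventually_ne_atTop 0] with k hk
  have pos := fullTurnPoint_pos hk
  rw [deriv_flatOscillation_fullTurnPoint hk, abs_div, abs_neg, abs_two, abs_of_pos (pow_pos pos 3),
    inv_pow, div_eq_mul_inv]

/-- Let `f(0) = 0` and `f(x) = sin(e^{1/x²})·e^{-1/x²}` for `x ≠ 0`.
Then (a) `f` vanishes to infinite order at `0` in the sense of distance-decay bounds:
for every `m` there is `C > 0` with `|f x| ≤ C·|x|^m` for `|x| ≤ 1`;
(b) `f` is smooth away from `0`, yet not `C¹` on `ℝ`, and its derivative is unbounded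
on every interval `(0, δ)`. -/
theorem stmt_16 :
    ∀ f : ℝ → ℝ, f 0 = 0 →
      (∀ x : ℝ, x ≠ 0 → f x = Real.sin (Real.exp (1 / x ^ 2)) * Real.exp (-1 / x ^ 2)) →
      (∀ m : ℕ, ∃ C : ℝ, 0 < C ∧ ∀ x : ℝ, |x| ≤ 1 → |f x| ≤ C * |x| ^ m) ∧
      ContDiffOn ℝ (⊤ : ℕ∞) f {(0 : ℝ)}ᶜ ∧
      ¬ ContDiff ℝ 1 f ∧
      ∀ δ : ℝ, 0 < δ → ∀ C : ℝ, ∃ x ∈ Set.Ioo (0 : ℝ) δ, C < |deriv f x| := by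
  intro f h0 hf
  obtain rfl : f = flatOscillation := by
    funext x
    rcases eq_or_ne x 0 with rfl | hx
    · rw [h0, flatOscillation_zero]
    · rw [hf x hx, flatOscillation_of_ne_zero hx, neg_div]
  refine ⟨fun m => ⟨m !, by positivity, fun x hx => ?_⟩, contDiffOn_flatOscillation, ?_, ?_⟩
  · calc |flatOscillation x| ≤ m ! * |x| ^ (2 * m) := abs_flatOscillation_le m x
      _ ≤ m ! * |x| ^ m := by
        gcongr ?_ * ?_
        exact pow_le_pow_of_le_one (abs_nonneg x) hx (by lia)
  · exact not_contDiff_one_of_tendsto_norm_deriv_atTop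
      (tendsto_nhds_of_tendsto_nhdsWithin tendsto_fullTurnPoint)
      tendsto_abs_deriv_flatOscillation_fullTurnPoint
  · exact fun δ hδ C => exists_mem_Ioo_lt_of_tendsto_atTop (g := fun x => |deriv flatOscillation x|)
      tendsto_fullTurnPoint tendsto_abs_deriv_flatOscillation_fullTurnPoint hδ C
end
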